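/- arXiv:1902.00747 — 4 statements merged into one kernel-verified Lean document; each statement's English description precedes it below -/
import Mathlib

section
/- Let G be the complete multipartite graph K_{n_1,…,n_k} of order n = n_1 + ⋯ + n_k (n_i ≥ 1). Then S_G(λ) = (λ+1)^{n−k} ( λ^k + (k−n) λ^{k−1} + (C(k,2) − (k−1)n) λ^{k−2} + ∑_{m=3}^{k} ∑_{i=0}^{m} (−1)^{i−1} 2^{i−1} C(k−i, m−i) (i−2) σ_i λ^{k−m} ), where σ_0 = 1, σ_1 = n, and σ_i = ∑_{1 ≤ j_1 < ⋯ < j_i ≤ k} n_{j_1} ⋯ n_{j_i} for i = 2,…,k, and C(a,b) denotes the binomial coefficient. -/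
open Polynomial Matrix Finset SimpleGraph

/- The Seidel matrix `S(G) = J - I - 2A(G)` of a simple graph `G`. -/
open scoped Classical in
noncomputable def seidelMatrix {V : Type*} [Fintype V] [DecidableEq V]
    (G : SimpleGraph V) : Matrix V V ℝ :=
  (Matrix.of fun _ _ => (1 : ℝ)) - 1 - 2 • G.adjMatrix ℝ

/-- The `m`-th elementary symmetric polynomial `σ_m` in the part sizes
`n 0, …, n (k-1)`, as a real number (`σ_0 = 1`, `σ_1 = n`). -/
noncomputable def esym {k : ℕ} (n : Fin k → ℕ) (m : ℕ) : ℝ :=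
  ∑ t ∈ Finset.powersetCard m (Finset.univ : Finset (Fin k)), ∏ j ∈ t, (n j : ℝ)

/-- Determinant of a rank-one update of an invertible diagonal matrix. -/
theorem det_diagonal_add_vecMulVec {ι K : Type*} [Fintype ι] [DecidableEq ι] [Field K]
    {d : ι → K} (hd : ∀ i, d i ≠ 0) (u v : ι → K) :
    (diagonal d + vecMulVec u v).det = ∏ i, d i + ∑ j, u j * v j * ∏ i ∈ univ.erase j, d i := by
  have hu : IsUnit (diagonal d).det := by
    rw [det_diagonal]
    exact (Finset.prod_ne_zero_iff.mpr fun i _ => hd i).isUnit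
  have hinv : (diagonal d)⁻¹ = diagonal fun i => (d i)⁻¹ := by
    refine Matrix.inv_eq_right_inv ?_
    rw [diagonal_mul_diagonal, ← diagonal_one]
    congr 1
    ext i
    exact mul_inv_cancel₀ (hd i)
  rw [vecMulVec_eq Unit, det_add_replicateCol_mul_replicateRow (ι := Unit) hu, hinv,
    det_diagonal, det_unique,
    Matrix.add_apply, one_apply_eq, Matrix.mul_apply, mul_add, mul_one, Finset.mul_sum]
  congr 1
  refine Finset.sum_congr rfl fun j _ => ?_
  rw [← Finset.mul_prod_erase univ d (mem_univ j)]
  have := hd j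
  simp only [mul_diagonal, replicateRow_apply, replicateCol_apply]
  field_simp

/-- The generating function of the elementary symmetric polynomials, homogenized by `y`. -/
theorem prod_C_add_C_mul_X_eq_sum_esym {k : ℕ} (n : Fin k → ℕ) (y : ℝ) :
    ∏ j, (C (n j : ℝ) * X + C y) = ∑ i ∈ range (k + 1), C (esym n i * y ^ (k - i)) * X ^ i := by
  rw [Finset.prod_add, Finset.sum_powerset, Finset.card_univ, Fintype.card_fin]
  refine Finset.sum_congr rfl fun i _ => ?_
  rw [esym, Finset.sum_mul, map_sum, Finset.sum_mul]
  refine Finset.sum_congr rfl fun t ht => ?_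
  rw [Finset.mem_powersetCard] at ht
  rw [Finset.prod_mul_distrib, Finset.prod_const, Finset.prod_const,
    Finset.card_sdiff_of_subset ht.1, ht.2, Finset.card_univ, Fintype.card_fin, C_mul, map_prod,
    C_pow]
  ring

theorem prod_add_sum_prod_erase_eq_sum_esym {k : ℕ} (n : Fin k → ℕ) (y : ℝ) :
    ∏ j, (y - 2 * n j) + ∑ j, (n j : ℝ) * ∏ i ∈ univ.erase j, (y - 2 * n i) =
      ∑ i ∈ range (k + 1),
        (-1 : ℝ) ^ ((i : ℤ) - 1) * (2 : ℝ) ^ ((i : ℤ) - 1) * ((i : ℝ) - 2) * esym n i *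
          y ^ (k - i) := by
  have h := prod_C_add_C_mul_X_eq_sum_esym n y
  have h₀ := congrArg (eval (-2)) h
  have h₁ := congrArg (fun p => eval (-2) (derivative p)) h
  simp only [derivative_prod_finset, eval_prod, eval_finsetSum, eval_add, eval_mul, eval_C,
    eval_X, eval_pow, derivative_sum, derivative_add, derivative_mul, derivative_C, derivative_X,
    derivative_X_pow, zero_mul, zero_add, mul_one, add_zero] at h₀ h₁
  have e : ∀ j, (n j : ℝ) * -2 + y = y - 2 * n j := fun j => by ring
  simp only [e] at h₀ h₁
  rw [h₀, Finset.sum_congr rfl fun j _ => mul_comm (n j : ℝ) _, h₁, ← Finset.sum_add_distrib]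
  refine Finset.sum_congr rfl fun i _ => ?_
  rw [← mul_zpow]
  rcases i with _ | i
  · norm_num
  · rw [Nat.cast_succ (R := ℤ), add_sub_cancel_right, zpow_natCast, Nat.add_sub_cancel, pow_succ]
    push_cast
    norm_num
    ring

theorem sum_mul_add_one_pow {R : Type*} [CommSemiring R] (k : ℕ) (a : ℕ → R) (x : R) :
    ∑ i ∈ range (k + 1), a i * (x + 1) ^ (k - i) =
      ∑ m ∈ range (k + 1),
        (∑ i ∈ range (m + 1), a i * ((k - i).choose (m - i) : R)) * x ^ (k - m) := by
  simp only [add_comm x, add_pow, Finset.sum_mul, Finset.mul_sum, one_pow, one_mul]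
  rw [Finset.sum_sigma', Finset.sum_sigma']
  refine Finset.sum_bij' (fun p _ => ⟨p.1 + p.2, p.1⟩) (fun q _ => ⟨q.2, q.1 - q.2⟩) ?_ ?_ ?_ ?_ ?_
  · rintro ⟨i, l⟩ h
    simp only [mem_sigma, mem_range] at h ⊢
    omega
  · rintro ⟨m, i⟩ h
    simp only [mem_sigma, mem_range] at h ⊢
    omega
  · rintro ⟨i, l⟩ _
    simp
  · rintro ⟨m, i⟩ h
    simp only [mem_sigma, mem_range] at h
    simp only [Sigma.mk.injEq, heq_eq_eq, and_true]
    omega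
  · rintro ⟨i, l⟩ _
    simp only [Nat.add_sub_cancel_left, Nat.sub_sub]
    ring

theorem seidelMatrix_completeMultipartiteGraph_charpoly_eval {k : ℕ} (n : Fin k → ℕ)
    (hn : ∀ i, 1 ≤ n i) {x : ℝ} (hx : x < -1) :
    (seidelMatrix (completeMultipartiteGraph fun i => Fin (n i))).charpoly.eval x =
      (x + 1) ^ ((∑ i, n i) - k) *
        (∏ j, (x + 1 - 2 * n j) + ∑ j, (n j : ℝ) * ∏ i ∈ univ.erase j, (x + 1 - 2 * n i)) := by
  let P : Matrix (Σ i, Fin (n i)) (Fin k) ℝ := Matrix.of fun v i => if v.1 = i then 1 else 0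
  let Q : Matrix (Fin k) (Σ i, Fin (n i)) ℝ := Matrix.of fun i v => if i = v.1 then 1 else -1
  have hS : seidelMatrix (completeMultipartiteGraph fun i => Fin (n i)) =
      P * Q - scalar _ (1 : ℝ) := by
    ext v w
    have hPQ : (P * Q) v w = if v.1 = w.1 then 1 else -1 := by
      simp only [P, Q, Matrix.mul_apply, Matrix.of_apply, ite_mul, one_mul, zero_mul,
        Finset.sum_ite_eq, mem_univ, if_true]
    rw [Matrix.sub_apply, hPQ, seidelMatrix, two_smul]
    by_cases h : v.1 = w.1
    · simp [h]
    · have hvw : v ≠ w := fun e => h (congrArg _ e)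
      simp [h, hvw]
  have hle : Fintype.card (Fin k) ≤ Fintype.card (Σ i, Fin (n i)) := by
    simpa using Finset.sum_le_sum fun i (_ : i ∈ univ) => hn i
  have hQP : scalar (Fin k) (x + 1) - Q * P =
      diagonal (fun j => x + 1 - 2 * (n j : ℝ)) + vecMulVec 1 fun j => (n j : ℝ) := by
    ext i j
    have : (Q * P) i j = (if i = j then 1 else -1) * (n j : ℝ) := by
      rw [Matrix.mul_apply, Fintype.sum_sigma, Fintype.sum_eq_single j fun l hl => by simp [P, hl]]
      by_cases h : i = j <;> simp [P, Q, h]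
    rw [Matrix.sub_apply, this]
    by_cases h : i = j
    · subst h
      simp
      ring
    · simp [h]
  have hd : ∀ j, x + 1 - 2 * (n j : ℝ) ≠ 0 := fun j => by
    have : (0 : ℝ) ≤ n j := Nat.cast_nonneg _
    linarith
  rw [hS, charpoly_sub_scalar, charpoly_mul_comm_of_le _ _ hle]
  simp only [eval_comp, eval_mul, eval_pow, eval_X, eval_add, eval_C, eval_charpoly, hQP,
    det_diagonal_add_vecMulVec hd]
  simp

/-- **Theorem (coefficients of the Seidel characteristic polynomial).**
For `G = K_{n_1,…,n_k}` of order `n = ∑ i, n i`,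
`S_G(λ) = (λ+1)^{n-k} (λ^k + (k-n)λ^{k-1} + (C(k,2)-(k-1)n)λ^{k-2}
  + ∑_{m=3}^{k} ∑_{i=0}^{m} (-1)^{i-1} 2^{i-1} C(k-i,m-i) (i-2) σ_i λ^{k-m})`,
where the signs and powers of two are integer powers `(-1)^{i-1}`, `2^{i-1}` in `ℝ`. -/
theorem seidel_charpoly_coeffs (k : ℕ) (n : Fin k → ℕ) (hn : ∀ i, 1 ≤ n i) :
    (seidelMatrix (completeMultipartiteGraph fun i => Fin (n i))).charpoly =
      (X + 1) ^ ((∑ i, n i) - k) *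
        (X ^ k + C ((k : ℝ) - ∑ i, (n i : ℝ)) * X ^ (k - 1) +
          C ((k.choose 2 : ℝ) - ((k : ℝ) - 1) * ∑ i, (n i : ℝ)) * X ^ (k - 2) +
          ∑ m ∈ Finset.Icc 3 k,
            C (∑ i ∈ Finset.range (m + 1),
                (-1 : ℝ) ^ ((i : ℤ) - 1) * (2 : ℝ) ^ ((i : ℤ) - 1) *
                  ((k - i).choose (m - i) : ℝ) * ((i : ℝ) - 2) * esym n i) *
              X ^ (k - m)) := by
  refine Polynomial.eq_of_infinite_eval_eq _ _ ((Set.Iio_infinite (-1 : ℝ)).mono fun x hx => ?_)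
  rw [Set.mem_ofPred_eq, seidelMatrix_completeMultipartiteGraph_charpoly_eval n hn hx,
    prod_add_sum_prod_erase_eq_sum_esym, sum_mul_add_one_pow]
  simp only [eval_mul, eval_pow, eval_add, eval_X, eval_one, eval_C, eval_finsetSum]
  congr 1
  have hσ₀ : esym n 0 = 1 := by simp [esym]
  have hσ₁ : esym n 1 = ∑ i, (n i : ℝ) := by simp [esym, Finset.powersetCard_one]
  rcases k with _ | _ | k
  · simp [hσ₀]
  · simp [Finset.sum_range_succ, hσ₀, hσ₁]
    ring
  · rw [← Finset.Ico_succ_right_eq_Icc, Finset.range_eq_Ico,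
      ← Finset.sum_Ico_consecutive _ (Nat.zero_le 3) (by omega : 3 ≤ k + 2 + 1)]
    congr 1
    · simp [Finset.sum_range_succ, hσ₀, hσ₁]
      ring
    · refine Finset.sum_congr rfl fun m _ => ?_
      congr 1
      refine Finset.sum_congr rfl fun i _ => ?_
      ring
end

section
/- Let K_{n_1,…,n_k} = K_{r_1·n_1,…,r_s·n_s} be a complete k-partite graph in which at least one part size occurs with multiplicity at least 3, i.e., r_i ≥ 3 for some i ∈ {1,…,s}. Then K_{n_1,…,n_k} is S-determined: every graph with the same Seidel spectrum as K_{n_1,…,n_k} is switching equivalent to a graph isomorphic to K_{n_1,…,n_k}. -/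
open Polynomial Matrix Finset SimpleGraph

/-- Two graphs on the same vertex set are switching equivalent iff their Seidel
matrices are conjugate by a diagonal `±1` matrix. -/
def SwitchingEquiv {V : Type*} [Fintype V] [DecidableEq V]
    (G H : SimpleGraph V) : Prop :=
  ∃ ε : V → ℝ, (∀ v, ε v = 1 ∨ ε v = -1) ∧
    seidelMatrix H = Matrix.diagonal ε * seidelMatrix G * Matrix.diagonal ε

/-- A graph `G` is determined, up to switching, by its Seidel spectrum
(`S`-determined) if every graph with the same Seidel spectrum is switching
equivalent to a graph isomorphic to `G`. -/
def SDetermined {V : Type} [Fintype V] [DecidableEq V] (G : SimpleGraph V) : Prop :=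
  ∀ (W : Type) [Fintype W] [DecidableEq W] (H : SimpleGraph W),
    (seidelMatrix H).charpoly = (seidelMatrix G).charpoly →
    ∃ H' : SimpleGraph W, SwitchingEquiv H H' ∧ Nonempty (H' ≃g G)

/-- The polynomial with roots `2 * d i`. -/
noncomputable def partPoly {I : Type*} [Fintype I] (d : I → ℕ) : ℝ[X] :=
  ∏ i, (X - C (2 * d i : ℝ))

lemma partPoly_eval {I : Type*} [Fintype I] (d : I → ℕ) (t : ℝ) :
    (partPoly d).eval t = ∏ i, (t - 2 * d i) := by
  simp [partPoly, eval_prod]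

lemma partPoly_monic {I : Type*} [Fintype I] (d : I → ℕ) : (partPoly d).Monic :=
  monic_prod_of_monic _ _ fun _ _ => monic_X_sub_C _

lemma partPoly_roots {I : Type*} [Fintype I] (d : I → ℕ) :
    (partPoly d).roots = (univ.val.map fun i => (2 * d i : ℝ)) := by
  have := roots_multiset_prod_X_sub_C (univ.val.map fun i => (2 * d i : ℝ))
  rwa [Multiset.map_map] at this

lemma partPoly_splits {I : Type*} [Fintype I] (d : I → ℕ) : (partPoly d).Splits :=
  Splits.prod fun _ _ => Splits.X_sub_C _

lemma partPoly_eval_derivative {I : Type*} [Fintype I] (d : I → ℕ) (t : ℝ)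
    (ht : (partPoly d).eval t ≠ 0) :
    (partPoly d).derivative.eval t = (partPoly d).eval t * ∑ i, (t - 2 * d i)⁻¹ := by
  rw [(partPoly_splits d).eval_derivative_eq_eval_mul_sum ht, partPoly_roots, Multiset.map_map]
  simp only [one_div, Function.comp_def]
  rfl

/-- Twice the characteristic polynomial of the quotient matrix of a complete multipartite graph
with part sizes `d`. -/
noncomputable def quotPoly {I : Type*} [Fintype I] (d : I → ℕ) : ℝ[X] :=
  X * (partPoly d).derivative - C ((Fintype.card I : ℝ) - 2) * partPoly d

lemma charpoly_quotient {I : Type*} [Fintype I] [DecidableEq I] (d : I → ℕ) :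
    C 2 * (((2 : ℝ) • (1 : Matrix I I ℝ) - Matrix.of fun _ _ => (1 : ℝ)) *
      Matrix.diagonal fun i => (d i : ℝ)).charpoly = quotPoly d := by
  refine Polynomial.eq_of_infinite_eval_eq _ _ (Set.Infinite.mono ?_
    (Set.Finite.infinite_compl ((partPoly d).roots.toFinset.finite_toSet)))
  intro t ht
  have hq : (partPoly d).eval t ≠ 0 := by
    intro h
    exact ht (by simpa [(partPoly_monic d).ne_zero] using h)
  have hne : ∀ i, t - 2 * (d i : ℝ) ≠ 0 := by
    rw [partPoly_eval, Finset.prod_ne_zero_iff] at hq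
    exact fun i => hq i (mem_univ i)
  have hdet : (Matrix.diagonal fun i => t - 2 * (d i : ℝ)).det = (partPoly d).eval t := by
    rw [det_diagonal, partPoly_eval]
  have hmat : Matrix.scalar I t - ((2 : ℝ) • (1 : Matrix I I ℝ) - Matrix.of fun _ _ => (1 : ℝ)) *
      Matrix.diagonal (fun i => (d i : ℝ)) = (Matrix.diagonal fun i => t - 2 * (d i : ℝ)) +
      replicateCol Unit (fun _ : I => (1 : ℝ)) * replicateRow Unit (fun i => (d i : ℝ)) := by
    ext i j
    by_cases h : i = j
    · subst h
      simp [Matrix.mul_apply, replicateCol, replicateRow, Matrix.diagonal_apply]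
      ring
    · simp [Matrix.mul_apply, replicateCol, replicateRow, Matrix.diagonal_apply, h]
  have hsum : ∑ i, (d i : ℝ) * (t - 2 * d i)⁻¹ =
      (t * ∑ i, (t - 2 * (d i : ℝ))⁻¹ - Fintype.card I) / 2 := by
    rw [Finset.mul_sum, Fintype.card_eq_sum_ones, Nat.cast_sum, ← Finset.sum_sub_distrib,
      Finset.sum_div]
    refine Finset.sum_congr rfl fun i _ => ?_
    have := mul_inv_cancel₀ (hne i)
    push_cast
    linear_combination (-1 / 2 : ℝ) * this
  have hinv : (Matrix.diagonal fun i => t - 2 * (d i : ℝ))⁻¹ =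
      Matrix.diagonal fun i => (t - 2 * (d i : ℝ))⁻¹ := by
    refine Matrix.inv_eq_right_inv ?_
    rw [diagonal_mul_diagonal]
    simp [hne]
  change eval t _ = eval t _
  rw [eval_mul, Matrix.eval_charpoly, hmat, det_add_replicateCol_mul_replicateRow (by
    rw [hdet]; exact hq.isUnit), hdet, hinv, det_unique]
  simp only [quotPoly, eval_sub, eval_mul, eval_X, eval_C, partPoly_eval_derivative d t hq]
  simp [Matrix.mul_apply, replicateCol, replicateRow, Matrix.diagonal_apply, hsum]
  ring

lemma quotPoly_eval_zero_ne {I : Type*} [Fintype I] (d : I → ℕ) (hd : ∀ i, 0 < d i)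
    (hI : 3 ≤ Fintype.card I) : (quotPoly d).eval 0 ≠ 0 := by
  have h1 : (partPoly d).eval 0 ≠ 0 := by
    rw [partPoly_eval, Finset.prod_ne_zero_iff]
    intro i _
    have := hd i
    simp
    omega
  have h2 : (3 : ℝ) ≤ Fintype.card I := by exact_mod_cast hI
  simp only [quotPoly, eval_sub, eval_mul, eval_X, eval_C, zero_mul, zero_sub]
  exact neg_ne_zero.mpr (mul_ne_zero (by linarith) h1)

lemma partPoly_eval_eq_zero_of_double_root {I : Type*} [Fintype I] [Nonempty I] (d : I → ℕ)
    (hd : ∀ i, 0 < d i) {p : ℝ} (h0 : (quotPoly d).eval p = 0)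
    (h1 : (quotPoly d).derivative.eval p = 0) : (partPoly d).eval p = 0 := by
  by_contra hq
  have hne : ∀ i, p - 2 * (d i : ℝ) ≠ 0 := by
    rw [partPoly_eval, ← ne_eq, Finset.prod_ne_zero_iff] at hq
    exact fun i => hq i (mem_univ i)
  have hq1 := partPoly_eval_derivative d p hq
  set s := ∑ i, (p - 2 * (d i : ℝ))⁻¹ with hs
  set s2 := ∑ i, ((p - 2 * (d i : ℝ))⁻¹) ^ 2 with hs2
  have hq2 : (partPoly d).derivative.derivative.eval p = (partPoly d).eval p * (s ^ 2 - s2) := by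
    have hA : HasDerivAt (fun t => (partPoly d).eval t * ∑ i, (t - 2 * (d i : ℝ))⁻¹)
        ((partPoly d).derivative.eval p * s + (partPoly d).eval p * (-s2)) p := by
      refine ((partPoly d).hasDerivAt p).mul ?_
      rw [hs2]
      rw [← Finset.sum_neg_distrib]
      refine HasDerivAt.fun_sum fun i _ => ?_
      have := ((hasDerivAt_id p).sub_const (2 * (d i : ℝ))).fun_inv (hne i)
      rw [neg_div, one_div, ← inv_pow] at this
      exact this
    have hB := (partPoly d).derivative.hasDerivAt p
    have hev : (fun t => (partPoly d).derivative.eval t) =ᶠ[nhds p]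
        fun t => (partPoly d).eval t * ∑ i, (t - 2 * (d i : ℝ))⁻¹ := by
      filter_upwards [(partPoly d).continuous.continuousAt.eventually_ne hq] with t ht
      exact partPoly_eval_derivative d t ht
    rw [hB.unique (hA.congr_of_eventuallyEq hev), hq1]
    ring
  have e0 : p * s = Fintype.card I - 2 := by
    simp only [quotPoly, eval_sub, eval_mul, eval_X, eval_C, hq1] at h0
    have : (partPoly d).eval p * (p * s - (Fintype.card I - 2)) = 0 := by linarith
    have := (mul_eq_zero.mp this).resolve_left hq
    linarith
  have e1 : s - p * s2 = 0 := by
    simp only [quotPoly, derivative_sub, derivative_mul, derivative_X, derivative_C, eval_add,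
      eval_sub, eval_mul, eval_X, eval_C, hq1, hq2, one_mul, zero_mul, zero_add] at h1
    have : (partPoly d).eval p * (s - p * s2) = 0 := by
      rw [← e0] at h1
      linear_combination h1
    exact (mul_eq_zero.mp this).resolve_left hq
  have hlt : s - p * s2 < 0 := by
    rw [hs, hs2, Finset.mul_sum, ← Finset.sum_sub_distrib]
    refine Finset.sum_neg (fun i _ => ?_) univ_nonempty
    have h : (p - 2 * (d i : ℝ))⁻¹ - p * ((p - 2 * (d i : ℝ))⁻¹) ^ 2 =
        -(2 * d i) * ((p - 2 * (d i : ℝ))⁻¹) ^ 2 := by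
      have := hne i
      field_simp
      ring
    rw [h]
    have h3 : (0 : ℝ) < d i := by exact_mod_cast hd i
    have h4 : 0 < ((p - 2 * (d i : ℝ))⁻¹) ^ 2 := by
      have := inv_ne_zero (hne i)
      positivity
    nlinarith
  linarith

lemma quotPoly_double_root_of_triple {I : Type*} [Fintype I] (d : I → ℕ) {p : ℝ}
    (h : (X - C p) ^ 3 ∣ partPoly d) : (partPoly d).eval p = 0 ∧ (quotPoly d).eval p = 0 ∧
      (quotPoly d).derivative.eval p = 0 := by
  obtain ⟨g, hg⟩ := h
  simp [quotPoly, hg, derivative_mul, derivative_pow]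

lemma partPoly_eq_of_quotPoly_eq {I J : Type*} [Fintype I] [Fintype J] (d : I → ℕ) (m : J → ℕ)
    (hm : ∀ j, 0 < m j) (hcard : Fintype.card I = Fintype.card J) (hI : 3 ≤ Fintype.card I)
    {p : ℝ} (hp : p ≠ 0) (htriple : (X - C p) ^ 3 ∣ partPoly d) (h : quotPoly d = quotPoly m) :
    partPoly d = partPoly m := by
  have : Nonempty J := Fintype.card_pos_iff.mp (by omega)
  obtain ⟨e0, e1, e2⟩ := quotPoly_double_root_of_triple d htriple
  rw [h] at e1 e2
  have e3 := partPoly_eval_eq_zero_of_double_root m hm e1 e2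
  obtain ⟨k, hk⟩ : ∃ k, Fintype.card I = k + 2 := ⟨_, (Nat.sub_add_cancel (by omega)).symm⟩
  set δ := partPoly d - partPoly m with hδ
  have hode : X * derivative δ = C (k : ℝ) * δ := by
    simp only [quotPoly, ← hcard, hk] at h
    push_cast at h
    rw [add_sub_cancel_right] at h
    rw [hδ, derivative_sub]
    linear_combination h
  have hmon : δ = C (δ.coeff k) * X ^ k := by
    ext j
    rw [coeff_C_mul_X_pow]
    split_ifs with hj
    · rw [hj]
    · have := congrArg (coeff · j) hode
      simp only [coeff_C_mul] at this
      rcases j with _ | j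
      · simp at this
        exact this.resolve_left (by omega)
      · rw [coeff_X_mul, coeff_derivative] at this
        have h5 : ((j : ℝ) + 1 - k) * δ.coeff (j + 1) = 0 := by linear_combination this
        refine (mul_eq_zero.mp h5).resolve_left ?_
        rw [sub_eq_zero]
        exact_mod_cast hj
  have hev : δ.eval p = 0 := by rw [hδ, eval_sub, e0, e3, sub_zero]
  rw [hmon] at hev
  simp [hp] at hev
  rw [hev] at hmon
  simp at hmon
  exact sub_eq_zero.mp hmon

/-- The matrix `S(G) + I`, whose entries are `-1` at adjacent pairs and `1` elsewhere. -/
noncomputable def shiftedSeidel {V : Type*} [Fintype V] [DecidableEq V]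
    (G : SimpleGraph V) : Matrix V V ℝ :=
  seidelMatrix G + 1

open scoped Classical in
lemma shiftedSeidel_apply {V : Type*} [Fintype V] [DecidableEq V] (G : SimpleGraph V) (u v : V) :
    shiftedSeidel G u v = if G.Adj u v then -1 else 1 := by
  simp only [shiftedSeidel, seidelMatrix, Matrix.add_apply, Matrix.sub_apply, Matrix.smul_apply,
    Matrix.of_apply, adjMatrix_apply]
  split_ifs
  · rw [nsmul_eq_mul]
    push_cast
    ring
  · simp

lemma shiftedSeidel_comm {V : Type*} [Fintype V] [DecidableEq V] (G : SimpleGraph V) (u v : V) :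
    shiftedSeidel G u v = shiftedSeidel G v u := by
  classical
  rw [shiftedSeidel_apply, shiftedSeidel_apply]
  exact if_congr (G.adj_comm u v) rfl rfl

lemma shiftedSeidel_isHermitian {V : Type*} [Fintype V] [DecidableEq V] (G : SimpleGraph V) :
    (shiftedSeidel G).IsHermitian := by
  ext u v
  rw [conjTranspose_apply, star_trivial, shiftedSeidel_comm]

lemma shiftedSeidel_charpoly {V : Type*} [Fintype V] [DecidableEq V] (G : SimpleGraph V) :
    (shiftedSeidel G).charpoly = (seidelMatrix G).charpoly.comp (X + C (-1)) := by
  rw [← charpoly_sub_scalar, map_neg, map_one, sub_neg_eq_add, shiftedSeidel]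

lemma exists_eq_transpose_mul_mul_of_charpoly_eq {V : Type*} [Fintype V] [DecidableEq V]
    {A B : Matrix V V ℝ} (hA : A.IsHermitian) (hB : B.IsHermitian)
    (h : B.charpoly = A.charpoly) : ∃ P : Matrix V V ℝ, B = Pᵀ * A * P := by
  have he := (hB.eigenvalues_eq_eigenvalues_iff hA).mpr h
  have sA := hA.conjStarAlgAut_star_eigenvectorUnitary
  have sB := hB.spectral_theorem
  rw [he, ← sA] at sB
  simp only [Unitary.conjStarAlgAut_apply] at sB
  refine ⟨(hA.eigenvectorUnitary : Matrix V V ℝ) *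
    star (hB.eigenvectorUnitary : Matrix V V ℝ), ?_⟩
  conv_lhs => rw [sB]
  simp [Matrix.star_eq_conjTranspose, Matrix.mul_assoc, conjTranspose_eq_transpose_of_trivial]

lemma exists_linearMap_dotProduct_eq_of_charpoly_eq {V W : Type*} [Fintype V] [DecidableEq V]
    [Fintype W] [DecidableEq W] {A : Matrix V V ℝ} {B : Matrix W W ℝ} (hA : A.IsHermitian)
    (hB : B.IsHermitian) (h : B.charpoly = A.charpoly) :
    ∃ φ : (W → ℝ) →ₗ[ℝ] (V → ℝ), ∀ x, x ⬝ᵥ B *ᵥ x = φ x ⬝ᵥ A *ᵥ φ x := by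
  have hcard : Fintype.card W = Fintype.card V := by
    rw [← charpoly_natDegree_eq_dim B, h, charpoly_natDegree_eq_dim]
  let e := Fintype.equivOfCardEq hcard
  obtain ⟨P, hP⟩ := exists_eq_transpose_mul_mul_of_charpoly_eq hA
    (B := Matrix.reindex e e B) (hB.submatrix _) (by rw [charpoly_reindex, h])
  refine ⟨P.mulVecLin ∘ₗ (LinearMap.funLeft ℝ ℝ e.symm), fun x => ?_⟩
  have : x ⬝ᵥ B *ᵥ x = (x ∘ e.symm) ⬝ᵥ (Matrix.reindex e e B) *ᵥ (x ∘ e.symm) := by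
    simp only [dotProduct, mulVec, reindex_apply, submatrix_apply, Function.comp_apply]
    rw [← e.symm.sum_comp]
    refine Finset.sum_congr rfl fun i _ => ?_
    rw [← e.symm.sum_comp]
  rw [this, hP]
  simp only [LinearMap.comp_apply, mulVecLin_apply, LinearMap.funLeft, LinearMap.coe_mk,
    AddHom.coe_mk]
  rw [← mulVec_mulVec, ← mulVec_mulVec, dotProduct_mulVec, vecMul_transpose]

lemma exists_equiv_of_card_fiber_eq {α β γ : Type*} [Fintype α] [Fintype β] [DecidableEq γ]
    (f : α → γ) (g : β → γ)
    (h : ∀ c, Fintype.card {a // f a = c} = Fintype.card {b // g b = c}) :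
    ∃ e : α ≃ β, ∀ a, g (e a) = f a := by
  let E := fun c => Fintype.equivOfCardEq (h c)
  refine ⟨(Equiv.sigmaFiberEquiv f).symm.trans
    ((Equiv.sigmaCongrRight E).trans (Equiv.sigmaFiberEquiv g)), fun a => ?_⟩
  exact (E (f a) ⟨a, rfl⟩).2

lemma exists_equiv_of_partPoly_eq {I J : Type*} [Fintype I] [Fintype J] {d : I → ℕ} {m : J → ℕ}
    (h : partPoly d = partPoly m) : ∃ e : I ≃ J, ∀ i, m (e i) = d i := by
  refine exists_equiv_of_card_fiber_eq d m fun c => ?_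
  have h1 := congrArg (fun q => q.roots.count (2 * (c : ℝ))) h
  simp only [partPoly_roots, Multiset.count_map] at h1
  simp only [mul_eq_mul_left_iff, Nat.cast_inj, OfNat.ofNat_ne_zero, or_false] at h1
  rw [Fintype.card_subtype, Fintype.card_subtype]
  simpa only [Finset.card, Finset.filter_val, eq_comm (a := c)] using h1

lemma charpoly_shiftedSeidel_of_partition {V I : Type*} [Fintype V] [DecidableEq V] [Fintype I]
    [DecidableEq I] (G : SimpleGraph V) (π : V → I) (hG : ∀ u v, G.Adj u v ↔ π u ≠ π v) :
    C 2 * (X ^ Fintype.card I * (shiftedSeidel G).charpoly) =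
      X ^ Fintype.card V * quotPoly fun i => Fintype.card {v // π v = i} := by
  let N : Matrix V I ℝ := Matrix.of fun v i => if π v = i then 1 else 0
  let Q : Matrix I I ℝ := (2 : ℝ) • (1 : Matrix I I ℝ) - Matrix.of fun _ _ => (1 : ℝ)
  have hM : shiftedSeidel G = N * (Q * Nᵀ) := by
    ext u v
    rw [shiftedSeidel_apply]
    simp only [hG, N, Q, Matrix.mul_apply, transpose_apply, Matrix.of_apply, Matrix.sub_apply,
      Matrix.smul_apply, Matrix.one_apply]
    by_cases h : π u = π v
    · simp [h]
      norm_num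
    · simp [h]
  have hN : Nᵀ * N = Matrix.diagonal fun i => ((Fintype.card {v // π v = i} : ℕ) : ℝ) := by
    ext i j
    simp only [N, Matrix.mul_apply, transpose_apply, Matrix.of_apply, Matrix.diagonal_apply]
    by_cases h : i = j
    · subst h
      simp [Fintype.card_subtype, ← ite_and]
    · simp only [h, if_false]
      refine Finset.sum_eq_zero fun v _ => ?_
      by_cases hv : π v = i
      · rw [if_neg (fun h' => h (hv.symm.trans h')), mul_zero]
      · rw [if_neg hv, zero_mul]
  rw [hM, charpoly_mul_comm', Matrix.mul_assoc, hN, mul_left_comm, charpoly_quotient]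

lemma LinearMap.BilinForm.eq_zero_of_isotropic {E : Type*} [AddCommGroup E] [Module ℝ E]
    (B : LinearMap.BilinForm ℝ E) (hs : ∀ x y, B x y = B y x) (l : E →ₗ[ℝ] ℝ)
    (h : ∀ x, -(l x) ^ 2 ≤ B x x) {z d : E} (hz : B z z < 0) (hd : B d d = 0) (hdz : B d z = 0)
    (y : E) : B d y = 0 := by
  have hlz : l z ≠ 0 := by
    intro h0
    have := h z
    rw [h0] at this
    linarith
  have hcs : ∀ x, B x x * B z z ≤ (B x z) ^ 2 := by
    intro x
    have h1 := h (x - (l x / l z) • z)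
    rw [map_sub, map_smul, smul_eq_mul, div_mul_cancel₀ _ hlz, sub_self] at h1
    set s := l x / l z
    have h2 : B (x - s • z) (x - s • z) = B x x - 2 * s * B x z + s ^ 2 * B z z := by
      simp only [map_sub, map_smul, LinearMap.sub_apply, LinearMap.smul_apply, smul_eq_mul, hs z x]
      ring
    rw [h2] at h1
    nlinarith [sq_nonneg (B x z - s * B z z)]
  by_contra hne
  have h3 := hcs (((B y z ^ 2 - B y y * B z z + 1) / (2 * B d y * B z z)) • d + y)
  set t := (B y z ^ 2 - B y y * B z z + 1) / (2 * B d y * B z z) with ht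
  have h4 : B (t • d + y) (t • d + y) = 2 * t * B d y + B y y := by
    simp only [map_add, map_smul, LinearMap.add_apply, LinearMap.smul_apply, smul_eq_mul, hs y d,
      hd]
    ring
  have h5 : B (t • d + y) z = B y z := by
    simp only [map_add, map_smul, LinearMap.add_apply, LinearMap.smul_apply, smul_eq_mul, hdz]
    ring
  have h6 : t * (2 * B d y * B z z) = B y z ^ 2 - B y y * B z z + 1 :=
    div_mul_cancel₀ _ (mul_ne_zero (mul_ne_zero two_ne_zero hne) hz.ne)
  rw [h4, h5] at h3
  linarith

lemma shiftedSeidel_eq_or {V : Type*} [Fintype V] [DecidableEq V] (G : SimpleGraph V) (u v : V) :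
    shiftedSeidel G u v = 1 ∨ shiftedSeidel G u v = -1 := by
  rw [shiftedSeidel_apply]
  split_ifs <;> simp

lemma shiftedSeidel_eq_one_iff {V : Type*} [Fintype V] [DecidableEq V] (G : SimpleGraph V)
    (u v : V) : shiftedSeidel G u v = 1 ↔ ¬ G.Adj u v := by
  rw [shiftedSeidel_apply]
  split_ifs with h <;> simp [h]
  norm_num

lemma shiftedSeidel_self {V : Type*} [Fintype V] [DecidableEq V] (G : SimpleGraph V) (v : V) :
    shiftedSeidel G v v = 1 := by
  simp [shiftedSeidel_eq_one_iff]

lemma isCompleteMultipartite_of_normalized {V : Type*} [Fintype V] [DecidableEq V]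
    (G : SimpleGraph V) (l : (V → ℝ) →ₗ[ℝ] ℝ)
    (hl : ∀ x, -(l x) ^ 2 ≤ x ⬝ᵥ shiftedSeidel G *ᵥ x) {a b c : V}
    (hab : shiftedSeidel G a b = -1) (hac : shiftedSeidel G a c = -1)
    (hbc : shiftedSeidel G b c = -1)
    (hneg : ∀ v, shiftedSeidel G v a + shiftedSeidel G v b + shiftedSeidel G v c < 0) :
    G.IsCompleteMultipartite := by
  set M := shiftedSeidel G with hM
  have hsymm : ∀ u v, M u v = M v u := shiftedSeidel_comm G
  have hpm : ∀ u v, M u v = 1 ∨ M u v = -1 := shiftedSeidel_eq_or G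
  have hself : ∀ v, M v v = 1 := shiftedSeidel_self G
  let B := Matrix.toBilin' M
  let e : V → V → ℝ := fun v => Pi.single v 1
  have hB : ∀ u v, B (e u) (e v) = M u v := fun u v => Matrix.toBilin'_single M u v
  have hBs : ∀ x y, B x y = B y x := by
    intro x y
    rw [Matrix.toBilin'_apply', Matrix.toBilin'_apply', dotProduct_mulVec, dotProduct_comm,
      ← mulVec_transpose]
    congr 2
    ext u v
    exact hsymm v u
  have rows : ∀ u v, M u v = 1 → M u a + M u b + M u c = M v a + M v b + M v c →
      ∀ w, M u w = M v w := by
    intro u v huv hsum w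
    have := B.eq_zero_of_isotropic hBs l (fun x => by rw [Matrix.toBilin'_apply']; exact hl x)
      (z := e a + e b + e c) (d := e u - e v)
      (by
        simp only [map_add, LinearMap.add_apply, hB, hself, hsymm b a, hsymm c a, hsymm c b,
          hab, hac, hbc]
        norm_num)
      (by
        simp only [map_sub, LinearMap.sub_apply, hB, hself, hsymm v u, huv]
        norm_num)
      (by
        simp only [map_sub, map_add, LinearMap.sub_apply, hB]
        linarith) (e w)
    simp only [map_sub, LinearMap.sub_apply, hB] at this
    linarith
  have same : ∀ u v, M u v = 1 → M u a + M u b + M u c ≤ M v a + M v b + M v c := by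
    intro u v huv
    by_contra! hlt
    have ha := rows u a
    have hb := rows u b
    have hc := rows u c
    have hnu := hneg u
    have h1 := hsymm b a
    have h2 := hsymm c a
    have h3 := hsymm c b
    have haa := hself a
    have hbb := hself b
    have hcc := hself c
    have h4 := hsymm a v
    have h5 := hsymm b v
    have h6 := hsymm c v
    rcases hpm u a with p | p <;> rcases hpm u b with q | q <;> rcases hpm u c with r | r <;>
    rcases hpm v a with p' | p' <;> rcases hpm v b with q' | q' <;>
    rcases hpm v c with r' | r' <;>
    first
      | (exfalso; linarith)
      | (have := ha p (by linarith) v; linarith)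
      | (have := hb q (by linarith) v; linarith)
      | (have := hc r (by linarith) v; linarith)
  refine ⟨fun x y w hxy hyw => ?_⟩
  rw [← shiftedSeidel_eq_one_iff, ← hM] at hxy hyw ⊢
  rw [rows x y hxy (le_antisymm (same x y hxy) (same y x (by rw [hsymm, hxy]))), hyw]

lemma exists_switchingEquiv_isCompleteMultipartite {W : Type*} [Fintype W] [DecidableEq W]
    (H : SimpleGraph W) (l : (W → ℝ) →ₗ[ℝ] ℝ)
    (hl : ∀ x, -(l x) ^ 2 ≤ x ⬝ᵥ shiftedSeidel H *ᵥ x) {a b c : W}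
    (hodd : shiftedSeidel H a b * shiftedSeidel H b c * shiftedSeidel H a c = -1) :
    ∃ H' : SimpleGraph W, SwitchingEquiv H H' ∧ H'.IsCompleteMultipartite ∧
      H'.Adj a b ∧ H'.Adj a c ∧ H'.Adj b c := by
  set M := shiftedSeidel H with hM
  have hsymm : ∀ u v, M u v = M v u := shiftedSeidel_comm H
  have hpm : ∀ u v, M u v = 1 ∨ M u v = -1 := shiftedSeidel_eq_or H
  have hself : ∀ v, M v v = 1 := shiftedSeidel_self H
  let f : W → ℝ := fun v => M v a - M a b * M v b - M a c * M v c
  let ε : W → ℝ := fun v => if f v < 0 then 1 else -1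
  have hε : ∀ v, ε v = 1 ∨ ε v = -1 := by
    intro v
    simp only [ε]
    split_ifs <;> simp
  have hεε : ∀ v, ε v * ε v = 1 := by
    intro v
    rcases hε v with h | h <;> rw [h] <;> norm_num
  have hεf : ∀ v, ε v * f v < 0 := by
    intro v
    simp only [ε]
    split_ifs with h
    · linarith
    · have : f v ≠ 0 := by
        simp only [f]
        rcases hpm v a with p | p <;> rcases hpm v b with q | q <;> rcases hpm v c with r | r <;>
        rcases hpm a b with p' | p' <;> rcases hpm a c with q' | q' <;>
        rw [p, q, r, p', q'] <;> norm_num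
      have := lt_of_le_of_ne (not_lt.mp h) this.symm
      linarith
  have habc : ε a = 1 ∧ ε b = -M a b ∧ ε c = -M a c := by
    have h1 := hsymm b a
    have h2 := hsymm c a
    have h3 := hsymm c b
    simp only [ε, f, h1, h2, h3, hself]
    rcases hpm a b with p | p <;> rcases hpm a c with q | q <;> rcases hpm b c with r | r <;>
    rw [p, q, r] at hodd ⊢ <;> first | (norm_num; done) | norm_num at hodd
  obtain ⟨hεa, hεb, hεc⟩ := habc
  let H' : SimpleGraph W :=
    { Adj := fun u v => ε u * M u v * ε v = -1
      symm := ⟨fun u v h => by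
        rw [hsymm v u, mul_right_comm, mul_comm (ε v), mul_right_comm]
        exact h⟩
      loopless := ⟨fun v h => by
        rw [hself, mul_one, hεε] at h
        norm_num at h⟩ }
  have hM' : ∀ u v, shiftedSeidel H' u v = ε u * M u v * ε v := by
    intro u v
    rw [shiftedSeidel_apply]
    split_ifs with h
    · exact Eq.symm (show ε u * M u v * ε v = -1 from h)
    · have h' : ¬ ε u * M u v * ε v = -1 := h
      rcases hε u with p | p <;> rcases hε v with q | q <;> rcases hpm u v with r | r <;>
      rw [p, q, r] at h' ⊢ <;> first | (norm_num; done) | norm_num at h'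
  have hab : H'.Adj a b := by
    change ε a * M a b * ε b = -1
    rw [hεa, hεb]
    rcases hpm a b with p | p <;> rw [p] <;> norm_num
  have hac : H'.Adj a c := by
    change ε a * M a c * ε c = -1
    rw [hεa, hεc]
    rcases hpm a c with p | p <;> rw [p] <;> norm_num
  have hbc : H'.Adj b c := by
    change ε b * M b c * ε c = -1
    rw [hεb, hεc, ← hodd]
    ring
  have adj_eq : ∀ {u v}, H'.Adj u v → shiftedSeidel H' u v = -1 := by
    intro u v h
    rw [hM']
    exact h
  refine ⟨H', ⟨ε, hε, ?_⟩, ?_, hab, hac, hbc⟩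
  · have h1 : seidelMatrix H' = shiftedSeidel H' - 1 := by simp [shiftedSeidel]
    have h2 : seidelMatrix H = M - 1 := by simp [hM, shiftedSeidel]
    ext u v
    rw [h1, h2, Matrix.mul_diagonal, Matrix.diagonal_mul, Matrix.sub_apply, Matrix.sub_apply, hM']
    by_cases h : u = v
    · subst h
      rw [Matrix.one_apply_eq, mul_sub, sub_mul, mul_one, hεε]
    · rw [Matrix.one_apply_ne h, sub_zero, sub_zero]
  · refine isCompleteMultipartite_of_normalized H' (l ∘ₗ (Matrix.diagonal ε).mulVecLin) (fun x => ?_)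
      (adj_eq hab) (adj_eq hac) (adj_eq hbc) fun v => ?_
    · have h1 : shiftedSeidel H' = Matrix.diagonal ε * M * Matrix.diagonal ε := by
        ext u v
        rw [hM', Matrix.mul_diagonal, Matrix.diagonal_mul]
      have h2 := hl (Matrix.diagonal ε *ᵥ x)
      rw [h1, ← mulVec_mulVec, ← mulVec_mulVec, dotProduct_mulVec x, ← mulVec_transpose,
        diagonal_transpose]
      exact h2
    · have h1 := hεf v
      simp only [hM', hεa, hεb, hεc]
      simp only [f] at h1
      linarith

lemma dotProduct_shiftedSeidel_of_partition {V I : Type*} [Fintype V] [DecidableEq V] [Fintype I]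
    [DecidableEq I] (G : SimpleGraph V) (π : V → I) (hG : ∀ u v, G.Adj u v ↔ π u ≠ π v)
    (x : V → ℝ) : -(∑ v, x v) ^ 2 ≤ x ⬝ᵥ shiftedSeidel G *ᵥ x := by
  have h : x ⬝ᵥ shiftedSeidel G *ᵥ x =
      2 * ∑ i, (∑ v, if π v = i then x v else 0) ^ 2 - (∑ v, x v) ^ 2 := by
    have h1 : ∑ i, (∑ v, if π v = i then x v else 0) ^ 2 =
        ∑ u, ∑ v, if π u = π v then x u * x v else 0 := by
      simp_rw [sq, Finset.sum_mul_sum]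
      rw [Finset.sum_comm]
      refine Finset.sum_congr rfl fun u _ => ?_
      rw [Finset.sum_comm]
      refine Finset.sum_congr rfl fun v _ => ?_
      simp [eq_comm]
    rw [h1, sq, Finset.sum_mul_sum]
    simp only [dotProduct, mulVec, Finset.mul_sum, ← Finset.sum_sub_distrib]
    refine Finset.sum_congr rfl fun u _ => Finset.sum_congr rfl fun v _ => ?_
    rw [shiftedSeidel_apply]
    simp only [hG]
    by_cases huv : π u = π v
    · simp [huv]
      ring
    · simp [huv]
  rw [h]
  have : 0 ≤ ∑ i, (∑ v, if π v = i then x v else 0) ^ 2 :=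
    Finset.sum_nonneg fun i _ => sq_nonneg _
  linarith

lemma dotProduct_shiftedSeidel_nonneg {W : Type*} [Fintype W] [DecidableEq W] (H : SimpleGraph W)
    (h : ∀ a b c, shiftedSeidel H a b * shiftedSeidel H b c * shiftedSeidel H a c ≠ -1)
    (x : W → ℝ) : 0 ≤ x ⬝ᵥ shiftedSeidel H *ᵥ x := by
  rcases isEmpty_or_nonempty W with hW | ⟨⟨a⟩⟩
  · simp [dotProduct]
  have hM : ∀ u v, shiftedSeidel H u v = shiftedSeidel H a u * shiftedSeidel H a v := by
    intro u v
    have := h a u v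
    rcases shiftedSeidel_eq_or H a u with p | p <;> rcases shiftedSeidel_eq_or H a v with q | q <;>
    rcases shiftedSeidel_eq_or H u v with r | r <;> rw [p, q, r] at this ⊢ <;>
    first | (norm_num; done) | norm_num at this
  have : x ⬝ᵥ shiftedSeidel H *ᵥ x = (∑ u, shiftedSeidel H a u * x u) ^ 2 := by
    rw [sq, Finset.sum_mul_sum]
    simp only [dotProduct, mulVec, Finset.mul_sum]
    refine Finset.sum_congr rfl fun u _ => Finset.sum_congr rfl fun v _ => ?_
    rw [hM]
    ring
  rw [this]
  positivity

lemma exists_dotProduct_shiftedSeidel_neg {V : Type*} [Fintype V] [DecidableEq V]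
    (G : SimpleGraph V) {a b c : V} (hab : G.Adj a b) (hac : G.Adj a c) (hbc : G.Adj b c) :
    ∃ x, x ⬝ᵥ shiftedSeidel G *ᵥ x < 0 := by
  refine ⟨Pi.single a 1 + Pi.single b 1 + Pi.single c 1, ?_⟩
  rw [← Matrix.toBilin'_apply']
  simp only [map_add, LinearMap.add_apply, Matrix.toBilin'_single, shiftedSeidel_apply]
  simp [hab, hac, hbc, hab.symm, hac.symm, hbc.symm]
  norm_num

lemma quotPoly_eq_of_X_pow_mul_eq {I J : Type*} [Fintype I] [Fintype J] {d : I → ℕ} {m : J → ℕ}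
    (hd : ∀ i, 0 < d i) (hm : ∀ j, 0 < m j) (hI : 3 ≤ Fintype.card I) (hJ : 3 ≤ Fintype.card J)
    (h : X ^ Fintype.card J * quotPoly d = X ^ Fintype.card I * quotPoly m) :
    Fintype.card I = Fintype.card J ∧ quotPoly d = quotPoly m := by
  have hd0 := quotPoly_eval_zero_ne d hd hI
  have hm0 := quotPoly_eval_zero_ne m hm hJ
  have hcard : Fintype.card I = Fintype.card J := by
    have h1 := congrArg natTrailingDegree h
    rw [mul_comm, mul_comm (X ^ Fintype.card I), natTrailingDegree_mul_X_pow,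
      natTrailingDegree_mul_X_pow, natTrailingDegree_eq_zero.mpr (Or.inr ?_),
      natTrailingDegree_eq_zero.mpr (Or.inr ?_)] at h1
    · omega
    · rwa [coeff_zero_eq_eval_zero]
    · rwa [coeff_zero_eq_eval_zero]
    · rintro h
      simp [h] at hm0
    · rintro h
      simp [h] at hd0
  refine ⟨hcard, ?_⟩
  rw [hcard] at h
  exact mul_left_cancel₀ (pow_ne_zero _ X_ne_zero) h

theorem sDetermined_of_partition {V : Type} {I : Type} [Fintype V] [DecidableEq V] [Fintype I]
    [DecidableEq I] (G : SimpleGraph V) (π : V → I) (hG : ∀ u v, G.Adj u v ↔ π u ≠ π v)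
    (hπ : Function.Surjective π) {i j k : I} (hij : i ≠ j) (hik : i ≠ k) (hjk : j ≠ k)
    (hcij : Fintype.card {v // π v = i} = Fintype.card {v // π v = j})
    (hcik : Fintype.card {v // π v = i} = Fintype.card {v // π v = k}) :
    SDetermined G := by
  classical
  intro W _ _ H hspec
  have hchar : (shiftedSeidel H).charpoly = (shiftedSeidel G).charpoly := by
    rw [shiftedSeidel_charpoly, shiftedSeidel_charpoly, hspec]
  have hGherm := shiftedSeidel_isHermitian G
  have hHherm := shiftedSeidel_isHermitian H
  obtain ⟨a, b, c, hodd⟩ : ∃ a b c,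
      shiftedSeidel H a b * shiftedSeidel H b c * shiftedSeidel H a c = -1 := by
    by_contra! hcon
    obtain ⟨ψ, hψ⟩ := exists_linearMap_dotProduct_eq_of_charpoly_eq hHherm hGherm hchar.symm
    obtain ⟨u, rfl⟩ := hπ i
    obtain ⟨v, rfl⟩ := hπ j
    obtain ⟨w, rfl⟩ := hπ k
    obtain ⟨x, hx⟩ := exists_dotProduct_shiftedSeidel_neg G ((hG u v).mpr hij)
      ((hG u w).mpr hik) ((hG v w).mpr hjk)
    rw [hψ] at hx
    exact absurd (dotProduct_shiftedSeidel_nonneg H hcon (ψ x)) (not_le.mpr hx)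
  obtain ⟨φ, hφ⟩ := exists_linearMap_dotProduct_eq_of_charpoly_eq hGherm hHherm hchar
  obtain ⟨H', hsw, hmult, hab, hac, hbc⟩ := exists_switchingEquiv_isCompleteMultipartite H
    ((∑ v, LinearMap.proj v) ∘ₗ φ) (fun x => by
      rw [hφ]
      simpa using dotProduct_shiftedSeidel_of_partition G π hG (φ x)) hodd
  refine ⟨H', hsw, ?_⟩
  let ρ : W → Quotient hmult.setoid := Quotient.mk hmult.setoid
  have hH' : ∀ u v, H'.Adj u v ↔ ρ u ≠ ρ v := by
    intro u v
    rw [ne_eq, Quotient.eq]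
    exact not_not.symm
  have hchar' : (shiftedSeidel H').charpoly = (shiftedSeidel G).charpoly := by
    obtain ⟨ε, hε, hsw⟩ := hsw
    have hεε : Matrix.diagonal ε * Matrix.diagonal ε = 1 := by
      rw [diagonal_mul_diagonal, ← diagonal_one]
      congr 1
      ext v
      rcases hε v with h | h <;> rw [h] <;> norm_num
    rw [shiftedSeidel_charpoly, hsw, charpoly_mul_comm, ← Matrix.mul_assoc, hεε, Matrix.one_mul,
      hspec, shiftedSeidel_charpoly]
  set d : I → ℕ := fun i => Fintype.card {v // π v = i} with hd
  set m : Quotient hmult.setoid → ℕ := fun q => Fintype.card {v // ρ v = q} with hm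
  have hdpos : ∀ i, 0 < d i := fun i =>
    Fintype.card_pos_iff.mpr ⟨⟨_, (hπ i).choose_spec⟩⟩
  have hmpos : ∀ q, 0 < m q := fun q =>
    Fintype.card_pos_iff.mpr ⟨⟨_, q.out_eq⟩⟩
  have hI : 3 ≤ Fintype.card I :=
    Fintype.two_lt_card_iff.mpr ⟨i, j, k, hij, hik, hjk⟩
  have hJ : 3 ≤ Fintype.card (Quotient hmult.setoid) :=
    Fintype.two_lt_card_iff.mpr ⟨ρ a, ρ b, ρ c, (hH' _ _).mp hab, (hH' _ _).mp hac,
      (hH' _ _).mp hbc⟩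
  have hVW : Fintype.card W = Fintype.card V := by
    rw [← charpoly_natDegree_eq_dim (shiftedSeidel H), hchar, charpoly_natDegree_eq_dim]
  obtain ⟨hcard, hquot⟩ := quotPoly_eq_of_X_pow_mul_eq hdpos hmpos hI hJ (by
    have h1 := charpoly_shiftedSeidel_of_partition G π hG
    have h2 := charpoly_shiftedSeidel_of_partition H' ρ hH'
    rw [hchar', hVW] at h2
    refine mul_left_cancel₀ (pow_ne_zero (Fintype.card V) (X_ne_zero (R := ℝ))) ?_
    linear_combination (X ^ Fintype.card I) * h2 - (X ^ Fintype.card (Quotient hmult.setoid)) * h1)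
  have htriple : (X - C (2 * d i : ℝ)) ^ 3 ∣ partPoly d := by
    have h1 : ∏ t ∈ {i, j, k}, (X - C (2 * d t : ℝ)) = (X - C (2 * d i : ℝ)) ^ 3 := by
      rw [Finset.prod_insert (by simp [hij, hik]), Finset.prod_pair hjk, show d j = d i from hcij.symm,
        show d k = d i from hcik.symm]
      ring
    rw [← h1]
    exact Finset.prod_dvd_prod_of_subset _ _ _ (Finset.subset_univ _)
  obtain ⟨e, he⟩ := exists_equiv_of_partPoly_eq (partPoly_eq_of_quotPoly_eq d m hmpos hcard hI
    (by have := hdpos i; positivity) htriple hquot)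
  obtain ⟨E, hE⟩ := exists_equiv_of_card_fiber_eq ρ (fun v => e (π v)) (fun q => by
    have h1 := he (e.symm q)
    rw [e.apply_symm_apply] at h1
    change m q = _
    rw [h1]
    refine Fintype.card_congr (Equiv.subtypeEquivRight fun v => ?_)
    rw [e.eq_symm_apply])
  refine ⟨⟨E, fun {u v} => ?_⟩⟩
  rw [hG, hH', ← hE u, ← hE v, e.injective.ne_iff]

/-- **Theorem.** The complete `k`-partite graph `K_{r_1·n_1,…,r_s·n_s}`, in which
some part size occurs with multiplicity at least `3` (`r i ≥ 3` for some `i`),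
is determined, up to switching, by its Seidel spectrum. -/
theorem sDetermined_of_multiplicity_ge_three (s : ℕ) (r n : Fin s → ℕ)
    (hr : ∀ i, 1 ≤ r i) (hn : ∀ i, 1 ≤ n i) (hdist : Function.Injective n)
    (hthree : ∃ i, 3 ≤ r i) :
    SDetermined (completeMultipartiteGraph
      fun p : (i : Fin s) × Fin (r i) => Fin (n p.1)) := by
  obtain ⟨i, hi⟩ := hthree
  have hcard : ∀ p : (i : Fin s) × Fin (r i), Fintype.card
      {v : (p : (i : Fin s) × Fin (r i)) × Fin (n p.1) // v.1 = p} = n p.1 := by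
    intro p
    rw [Fintype.card_congr (Equiv.sigmaSubtype p), Fintype.card_fin]
  refine sDetermined_of_partition _ Sigma.fst (fun u v => by simp)
    (fun p => ⟨⟨p, ⟨0, hn p.1⟩⟩, rfl⟩)
    (i := ⟨i, ⟨0, by omega⟩⟩) (j := ⟨i, ⟨1, by omega⟩⟩) (k := ⟨i, ⟨2, by omega⟩⟩)
    (by simp) (by simp) (by simp) ?_ ?_
  · rw [hcard, hcard]
  · rw [hcard, hcard]
end

section
/- If max{n_1, n_2, n_3, n_4} is a prime number (all n_i ≥ 1), then the complete 4-partite graph K_{n_1,n_2,n_3,n_4} is S-determined: every graph with the same Seidel spectrum as K_{n_1,n_2,n_3,n_4} is switching equivalent to a graph isomorphic to K_{n_1,n_2,n_3,n_4}. -/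
open Polynomial Matrix Finset SimpleGraph

/-- If two quadruples of positive integers agree in `e₁`, `e₃`, `e₄` (so that their monic
polynomials differ by a multiple of `x ^ 2`) and the largest entry of the first is a prime `p`,
then `p` is an entry of the second. -/
lemma exists_eq_max_of_prod_sub_prod {p : ℕ} (hp : p.Prime) {n m : Fin 4 → ℕ}
    (hnp : ∀ i, n i ≤ p) {i₀ : Fin 4} (hi₀ : n i₀ = p) (hm : ∀ i, 1 ≤ m i)
    (hsum : ∑ i, m i = ∑ i, n i) (hprod : ∏ i, m i = ∏ i, n i) {c : ℤ}
    (hc : ∀ x : ℤ, ∏ i, (x - n i) - ∏ i, (x - m i) = c * x ^ 2) : ∃ i, m i = p := by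
  have hpos := hp.pos
  have hbound : ∑ i, m i ≤ 4 * p := by
    rw [hsum]
    simpa using Finset.sum_le_sum fun i (_ : i ∈ univ) => hnp i
  have hdvd : p ∣ ∏ i, m i := hprod ▸ hi₀ ▸ Finset.dvd_prod_of_mem n (mem_univ i₀)
  obtain ⟨j, -, k, hk⟩ := (hp.prime.dvd_finsetProd_iff _).1 hdvd
  have hone (i) (hi : i ≠ j) : p * k + m i + 2 ≤ 4 * p := by
    have h2 : ∑ l ∈ (univ.erase j).erase i, 1 ≤ ∑ l ∈ (univ.erase j).erase i, m l :=
      Finset.sum_le_sum fun l _ => hm l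
    have h3 : ((univ.erase j).erase i).card = 2 := by
      rw [card_erase_of_mem (by simp [hi]), card_erase_of_mem (mem_univ _)]; simp
    rw [← Finset.add_sum_erase _ _ (mem_univ j), ← Finset.add_sum_erase _ _
      (mem_erase.2 ⟨hi, mem_univ i⟩), hk] at hbound
    simp only [sum_const, h3, smul_eq_mul, mul_one] at h2
    omega
  have hk4 : k < 4 := by
    obtain ⟨i, hi⟩ := exists_ne j
    have := hone i hi
    by_contra! h
    nlinarith
  have hk0 : k ≠ 0 := by
    rintro rfl
    have := hm j
    omega
  by_cases hk1 : k = 1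
  · exact ⟨j, by rw [hk, hk1, mul_one]⟩
  have hp0 : (p : ℤ) ≠ 0 := by exact_mod_cast hp.ne_zero
  have hn0 : ∏ i, ((p : ℤ) - n i) = 0 :=
    Finset.prod_eq_zero (mem_univ i₀) (by rw [hi₀, sub_self])
  have hprime : Prime (p : ℤ) := Nat.prime_iff_prime_int.1 hp
  have hmain : ((k : ℤ) - 1) * ∏ i ∈ univ.erase j, ((p : ℤ) - m i) = c * p := by
    have := hc p
    rw [hn0, ← Finset.mul_prod_erase _ _ (mem_univ j), hk] at this
    refine mul_left_cancel₀ hp0 ?_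
    push_cast at this
    linear_combination this
  rcases hprime.dvd_or_dvd (Dvd.intro_left _ hmain.symm) with h | h
  · have h1 : (p : ℤ) ≤ k - 1 := Int.le_of_dvd (by omega) h
    obtain ⟨i, hi⟩ := exists_ne j
    have h2 := hone i hi
    have h3 := hm i
    have h4 := hp.two_le
    interval_cases k <;> omega
  · obtain ⟨i, hi, hdi⟩ := (hprime.dvd_finsetProd_iff _).1 h
    have hpi : p ∣ m i := by
      have := (dvd_sub_right (dvd_refl (p : ℤ))).1 hdi
      exact_mod_cast this
    obtain ⟨t, ht⟩ := hpi
    have h2 := hone i (ne_of_mem_erase hi)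
    have h3 := hm i
    rw [ht] at h2 h3
    have ht0 : t ≠ 0 := by rintro rfl; simp at h3
    refine ⟨i, ?_⟩
    have ht1 : t < 2 := by
      by_contra! h
      have : 2 ≤ k := by omega
      nlinarith
    rw [ht, show t = 1 by omega, mul_one]

/-- Two families with the same monic polynomial agree up to a permutation. -/
lemma exists_perm_of_prod_X_sub_C_eq {ι : Type*} [Fintype ι] {n m : ι → ℕ}
    (h : ∏ i, (X - C (n i : ℤ)) = ∏ i, (X - C (m i : ℤ))) :
    ∃ σ : ι ≃ ι, ∀ i, n (σ i) = m i := by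
  classical
  have hroots (f : ι → ℕ) :
      (∏ i, (X - C (f i : ℤ))).roots = univ.val.map fun i => (f i : ℤ) := by
    have := roots_multiset_prod_X_sub_C (univ.val.map fun i => (f i : ℤ))
    rwa [Multiset.map_map] at this
  have hcard (a : ℕ) : Nonempty ({i // m i = a} ≃ {i // n i = a}) := by
    have := congrArg (fun q => Multiset.count (a : ℤ) q.roots) h
    simp only [hroots, Multiset.count_map] at this
    rw [← Fintype.card_eq, Fintype.card_subtype, Fintype.card_subtype]
    simpa [Finset.card, eq_comm] using this.symm
  exact ⟨Equiv.ofFiberEquiv fun a => (hcard a).some, Equiv.ofFiberEquiv_map _⟩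

lemma exists_perm_of_symm_eq {n m : Fin 4 → ℕ} (hp : (univ.sup n).Prime) (hm : ∀ i, 1 ≤ m i)
    (hsum : ∑ i, m i = ∑ i, n i) (hprod : ∏ i, m i = ∏ i, n i)
    (h3 : m 0 * m 1 * m 2 + m 0 * m 1 * m 3 + m 0 * m 2 * m 3 + m 1 * m 2 * m 3 =
      n 0 * n 1 * n 2 + n 0 * n 1 * n 3 + n 0 * n 2 * n 3 + n 1 * n 2 * n 3) :
    ∃ σ : Fin 4 ≃ Fin 4, ∀ i, n (σ i) = m i := by
  obtain ⟨i₀, -, hi₀⟩ := Finset.exists_mem_eq_sup univ univ_nonempty n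
  have hs : ∑ i, (m i : ℤ) = ∑ i, (n i : ℤ) := by exact_mod_cast hsum
  have hq : ∏ i, (m i : ℤ) = ∏ i, (n i : ℤ) := by exact_mod_cast hprod
  have h3' : (m 0 * m 1 * m 2 + m 0 * m 1 * m 3 + m 0 * m 2 * m 3 + m 1 * m 2 * m 3 : ℤ) =
      n 0 * n 1 * n 2 + n 0 * n 1 * n 3 + n 0 * n 2 * n 3 + n 1 * n 2 * n 3 := by
    exact_mod_cast h3
  simp only [Fin.sum_univ_four, Fin.prod_univ_four] at hs hq
  obtain ⟨c, hc⟩ : ∃ c : ℤ, ∀ x : ℤ, ∏ i, (x - n i) - ∏ i, (x - m i) = c * x ^ 2 := by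
    refine ⟨n 0 * n 1 + n 0 * n 2 + n 0 * n 3 + n 1 * n 2 + n 1 * n 3 + n 2 * n 3 -
      (m 0 * m 1 + m 0 * m 2 + m 0 * m 3 + m 1 * m 2 + m 1 * m 3 + m 2 * m 3), fun x => ?_⟩
    simp only [Fin.prod_univ_four]
    linear_combination x ^ 3 * hs + x * h3' - hq
  obtain ⟨j, hj⟩ := exists_eq_max_of_prod_sub_prod hp
    (fun i => Finset.le_sup (mem_univ i)) hi₀.symm hm hsum hprod hc
  have hc0 : c = 0 := by
    have := hc (univ.sup n : ℕ)
    rw [Finset.prod_eq_zero (mem_univ i₀) (by rw [← hi₀, sub_self]),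
      Finset.prod_eq_zero (mem_univ j) (by rw [hj, sub_self])] at this
    simpa [hp.ne_zero] using this.symm
  refine exists_perm_of_prod_X_sub_C_eq (Polynomial.funext fun x => ?_)
  have := hc x
  simp only [eval_prod, eval_sub, eval_X, eval_C]
  rw [hc0] at this
  linarith

/-- The matrix `2I - J` of order four, i.e. `S(K₄) + I`. -/
def seidelK4 : Matrix (Fin 4) (Fin 4) ℝ :=
  Matrix.of fun i j => if i = j then 1 else -1

lemma det_fin_four {R : Type*} [CommRing R] (A : Matrix (Fin 4) (Fin 4) R) :
    A.det =
      A 0 0 * (A 1 1 * (A 2 2 * A 3 3 - A 2 3 * A 3 2) - A 1 2 * (A 2 1 * A 3 3 - A 2 3 * A 3 1) +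
        A 1 3 * (A 2 1 * A 3 2 - A 2 2 * A 3 1)) -
      A 0 1 * (A 1 0 * (A 2 2 * A 3 3 - A 2 3 * A 3 2) - A 1 2 * (A 2 0 * A 3 3 - A 2 3 * A 3 0) +
        A 1 3 * (A 2 0 * A 3 2 - A 2 2 * A 3 0)) +
      A 0 2 * (A 1 0 * (A 2 1 * A 3 3 - A 2 3 * A 3 1) - A 1 1 * (A 2 0 * A 3 3 - A 2 3 * A 3 0) +
        A 1 3 * (A 2 0 * A 3 1 - A 2 1 * A 3 0)) -
      A 0 3 * (A 1 0 * (A 2 1 * A 3 2 - A 2 2 * A 3 1) - A 1 1 * (A 2 0 * A 3 2 - A 2 2 * A 3 0) +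
        A 1 2 * (A 2 0 * A 3 1 - A 2 1 * A 3 0)) := by
  rw [det_succ_row_zero]
  simp [Fin.sum_univ_four, det_fin_three, Fin.succAbove]
  ring

lemma det_seidelK4 : seidelK4.det = -16 := by
  simp [seidelK4, det_fin_four]
  norm_num

lemma eval_charpoly_diagonal_mul_seidelK4 (d : Fin 4 → ℝ) (t : ℝ) :
    (diagonal d * seidelK4).charpoly.eval t =
      t ^ 4 - (d 0 + d 1 + d 2 + d 3) * t ^ 3 +
        4 * (d 0 * d 1 * d 2 + d 0 * d 1 * d 3 + d 0 * d 2 * d 3 + d 1 * d 2 * d 3) * t -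
        16 * (d 0 * d 1 * d 2 * d 3) := by
  rw [eval_charpoly]
  simp [seidelK4, det_fin_four]
  ring

lemma charpoly_submatrix_seidelK4 {V : Type*} [Fintype V] [DecidableEq V] (φ : V → Fin 4) :
    X ^ 4 * (seidelK4.submatrix φ φ).charpoly =
      X ^ Fintype.card V *
        (diagonal (fun i => (Fintype.card {v // φ v = i} : ℝ)) * seidelK4).charpoly := by
  have h := charpoly_mul_comm' (seidelK4.submatrix φ id)
    ((1 : Matrix (Fin 4) (Fin 4) ℝ).submatrix id φ)
  rw [Fintype.card_fin] at h
  convert h using 3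
  · ext v w
    simp [Matrix.mul_apply, Matrix.one_apply]
  · ext i j
    have (v : V) : (if i = φ v then (1 : ℝ) else 0) * seidelK4 (φ v) j =
        if φ v = i then seidelK4 i j else 0 := by
      split_ifs with h1 h2 h2 <;> simp_all
    rw [Matrix.diagonal_mul]
    simp [Matrix.mul_apply, Matrix.one_apply, Fintype.card_subtype, this, Finset.sum_ite,
      -ite_mul]

lemma seidelMatrix_apply {V : Type*} [Fintype V] [DecidableEq V] (G : SimpleGraph V)
    [DecidableRel G.Adj] (v w : V) :
    seidelMatrix G v w = if v = w then 0 else if G.Adj v w then -1 else 1 := by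
  unfold seidelMatrix
  rw [two_nsmul]
  by_cases hvw : v = w
  · subst hvw
    simp
  · by_cases h : G.Adj v w <;> simp [hvw, h]

lemma seidelMatrix_comap_top {V : Type*} [Fintype V] [DecidableEq V] (φ : V → Fin 4) :
    seidelMatrix ((⊤ : SimpleGraph (Fin 4)).comap φ) = seidelK4.submatrix φ φ - 1 := by
  ext v w
  rw [seidelMatrix_apply]
  by_cases hvw : v = w
  · subst hvw
    simp [seidelK4]
  · by_cases h : φ v = φ w <;> simp [seidelK4, h, hvw]

/-- A symmetric matrix over a field is determined by a nonsingular principal submatrix of order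
its rank. -/
lemma exists_eq_mul_submatrix_mul_transpose {K V : Type*} [Field K] [Fintype V] {r : ℕ}
    {M : Matrix V V K} (hM : M.IsSymm) (hr : M.rank = r) :
    ∃ (s : Fin r → V) (C : Matrix V (Fin r) K), (M.submatrix s s).det ≠ 0 ∧
      M.submatrix id s = C * M.submatrix s s ∧ M = C * M.submatrix s s * Cᵀ := by
  classical
  obtain ⟨f, hf, hspan⟩ : ∃ f : Fin r → V → K, (∀ i, f i ∈ Set.range M.row) ∧
      Submodule.span K (Set.range f) = Submodule.span K (Set.range M.row) := by
    rw [rank_eq_finrank_span_row] at hr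
    subst hr
    obtain ⟨f, hf, hspan, -⟩ := Submodule.exists_fun_fin_finrank_span_eq K (Set.range M.row)
    exact ⟨f, hf, hspan⟩
  choose s hs using hf
  have hrow (v : V) : ∃ c : Fin r → K, ∑ i, c i • f i = M v :=
    (Submodule.mem_span_range_iff_exists_fun K).1
      (hspan.ge (Submodule.subset_span (Set.mem_range_self (f := M.row) v)))
  choose C hC using hrow
  have h1 : M = Matrix.of C * M.submatrix s id := by
    ext v w
    rw [← hC v]
    simp [Matrix.mul_apply, ← hs]
  have h2 : M.submatrix id s = Matrix.of C * M.submatrix s s := by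
    conv_lhs => rw [h1]
    rfl
  have h3 : M = Matrix.of C * M.submatrix s s * (Matrix.of C)ᵀ := by
    have h4 : M.submatrix s id = (M.submatrix id s)ᵀ := by
      rw [transpose_submatrix, hM.eq]
    conv_lhs => rw [h1, h4, h2, transpose_mul, transpose_submatrix, hM.eq, ← Matrix.mul_assoc]
  refine ⟨s, Matrix.of C, fun hdet => ?_, h2, h3⟩
  have hle : M.rank ≤ (M.submatrix s s).rank := by
    conv_lhs => rw [h3]
    exact (rank_mul_le_left _ _).trans (rank_mul_le_right _ _)
  have hli : LinearIndependent K (M.submatrix s s).row := by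
    rw [linearIndependent_iff_card_le_finrank_span, Set.finrank, ← rank_eq_finrank_span_row,
      Fintype.card_fin]
    exact hr.ge.trans hle
  exact ((isUnit_iff_isUnit_det _).1 (linearIndependent_rows_iff_isUnit.1 hli)).ne_zero hdet

/-- A nonsingular symmetric `±1` matrix of order four with unit diagonal is `2I - J` up to
switching. -/
lemma exists_switch_eq_seidelK4 {A : Matrix (Fin 4) (Fin 4) ℝ} (hA : A.IsSymm)
    (hd : ∀ i, A i i = 1) (h1 : ∀ i j, A i j = 1 ∨ A i j = -1) (hdet : A.det ≠ 0) :
    ∃ δ : Fin 4 → ℝ, (∀ i, δ i = 1 ∨ δ i = -1) ∧ ∀ i j, A i j = δ i * δ j * seidelK4 i j := by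
  have hs (i j) : A j i = A i j := congrFun (congrFun hA i) j
  refine ⟨![1, -A 0 1, -A 0 2, -A 0 3], ?_, ?_⟩
  · have this (j) : -A 0 j = 1 ∨ -A 0 j = -1 := by rcases h1 0 j with h | h <;> simp [h]
    intro i
    fin_cases i
    exacts [Or.inl rfl, this 1, this 2, this 3]
  · rw [det_fin_four] at hdet
    simp only [hd, hs 0 1, hs 0 2, hs 0 3, hs 1 2, hs 1 3, hs 2 3] at hdet
    have hsq (i j) : A i j * A i j = 1 := by rcases h1 i j with h | h <;> simp [h]
    have key : A 1 2 = -(A 0 1 * A 0 2) ∧ A 1 3 = -(A 0 1 * A 0 3) ∧ A 2 3 = -(A 0 2 * A 0 3) := by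
      rcases h1 0 1 with a | a <;> rcases h1 0 2 with b | b <;> rcases h1 0 3 with c | c <;>
      rcases h1 1 2 with d | d <;> rcases h1 1 3 with e | e <;> rcases h1 2 3 with f | f <;>
      simp only [a, b, c, d, e, f] at hdet ⊢ <;>
      first | (norm_num; done) | exact absurd (by norm_num) hdet
    obtain ⟨k1, k2, k3⟩ := key
    intro i j
    fin_cases i <;> fin_cases j <;>
      simp [seidelK4, hd, hs 0 1, hs 0 2, hs 0 3, hs 1 2, hs 1 3, hs 2 3, hsq, k1, k2, k3, mul_comm]

lemma exists_eq_single_of_seidelK4 {z : Fin 4 → ℝ}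
    (h1 : ∀ i, (z ᵥ* seidelK4) i = 1 ∨ (z ᵥ* seidelK4) i = -1)
    (h2 : (z ᵥ* seidelK4) ⬝ᵥ z = 1) :
    ∃ i e, (e = 1 ∨ e = -1) ∧ z = Pi.single i e := by
  obtain ⟨u, hu⟩ : ∃ u, u = z ᵥ* seidelK4 := ⟨_, rfl⟩
  rw [← hu] at h1 h2
  have hz (i) : z i = (u i - (u 0 + u 1 + u 2 + u 3) / 2) / 2 := by
    rw [hu]
    fin_cases i <;> simp [Matrix.vecMul, dotProduct, Fin.sum_univ_four, seidelK4] <;> ring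
  simp only [dotProduct, Fin.sum_univ_four, hz] at h2
  have h0 : z = ![z 0, z 1, z 2, z 3] := by ext i; fin_cases i <;> rfl
  have hsingle (e : ℝ) : Pi.single 0 e = ![e, 0, 0, 0] ∧ Pi.single 1 e = ![0, e, 0, 0] ∧
      Pi.single 2 e = ![0, 0, e, 0] ∧ Pi.single 3 e = ![0, 0, 0, e] := by
    refine ⟨?_, ?_, ?_, ?_⟩ <;> ext i <;> fin_cases i <;> rfl
  simp only [hz] at h0
  rw [h0]
  rcases h1 0 with a | a <;> rcases h1 1 with b | b <;> rcases h1 2 with c | c <;>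
    rcases h1 3 with d | d <;> simp only [a, b, c, d] at h2 ⊢ <;> norm_num at h2 <;>
  first
  | (refine ⟨0, 1, Or.inl rfl, ?_⟩; norm_num [hsingle]; done)
  | (refine ⟨1, 1, Or.inl rfl, ?_⟩; norm_num [hsingle]; done)
  | (refine ⟨2, 1, Or.inl rfl, ?_⟩; norm_num [hsingle]; done)
  | (refine ⟨3, 1, Or.inl rfl, ?_⟩; norm_num [hsingle]; done)
  | (refine ⟨0, -1, Or.inr rfl, ?_⟩; norm_num [hsingle]; done)
  | (refine ⟨1, -1, Or.inr rfl, ?_⟩; norm_num [hsingle]; done)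
  | (refine ⟨2, -1, Or.inr rfl, ?_⟩; norm_num [hsingle]; done)
  | (refine ⟨3, -1, Or.inr rfl, ?_⟩; norm_num [hsingle])

lemma isHermitian_seidelMatrix_add_one {V : Type*} [Fintype V] [DecidableEq V]
    (G : SimpleGraph V) : (seidelMatrix G + 1).IsHermitian := by
  classical
  ext v w
  simp [seidelMatrix_apply, Matrix.one_apply, eq_comm, G.adj_comm]

/-- A graph with `rank (S + I) = 4` is complete four-partite up to switching (with possibly empty
parts). -/
lemma exists_switchingEquiv_comap_top {W : Type*} [Fintype W] [DecidableEq W] {H : SimpleGraph W}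
    (hr : (seidelMatrix H + 1).rank = 4) :
    ∃ φ : W → Fin 4, SwitchingEquiv H ((⊤ : SimpleGraph (Fin 4)).comap φ) := by
  classical
  obtain ⟨M, hM⟩ : ∃ M, M = seidelMatrix H + 1 := ⟨_, rfl⟩
  have hsymm : M.IsSymm := by
    have := isHermitian_seidelMatrix_add_one H
    rw [← hM] at this
    simpa [IsHermitian, IsSymm, conjTranspose_eq_transpose_of_trivial] using this
  have hdiag (v) : M v v = 1 := by simp [hM, seidelMatrix_apply]
  have hpm (v w) : M v w = 1 ∨ M v w = -1 := by
    by_cases hvw : v = w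
    · exact Or.inl (hvw ▸ hdiag v)
    · by_cases h : H.Adj v w <;> simp [hM, seidelMatrix_apply, hvw, h]
  rw [← hM] at hr
  obtain ⟨s, C, hdet, hcol, hfac⟩ := exists_eq_mul_submatrix_mul_transpose hsymm hr
  obtain ⟨δ, hδ, hA⟩ := exists_switch_eq_seidelK4 (hsymm.submatrix s) (fun _ => hdiag _)
    (fun _ _ => hpm _ _) hdet
  have hsq (i) : δ i * δ i = 1 := by rcases hδ i with h | h <;> simp [h]
  have hA' : M.submatrix s s = diagonal δ * seidelK4 * diagonal δ := by
    ext i j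
    rw [hA, Matrix.mul_diagonal, Matrix.diagonal_mul]
    ring
  obtain ⟨Z, hZ⟩ : ∃ Z, Z = C * diagonal δ := ⟨_, rfl⟩
  have hMZ : M = Z * seidelK4 * Zᵀ := by
    rw [hZ, transpose_mul, diagonal_transpose, hfac, hA']
    simp only [Matrix.mul_assoc]
  have hcolZ : Z * seidelK4 = M.submatrix id s * diagonal δ := by
    rw [hcol, hA', hZ]
    simp only [Matrix.mul_assoc, diagonal_mul_diagonal, hsq]
    simp
  have hsingle (v : W) : ∃ i e, (e = 1 ∨ e = -1) ∧ Z v = Pi.single i e := by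
    apply exists_eq_single_of_seidelK4
    · intro i
      have h : (Z v ᵥ* seidelK4) i = M v (s i) * δ i := by
        have := congrFun (congrFun hcolZ v) i
        rwa [Matrix.mul_diagonal] at this
      rw [h]
      rcases hpm v (s i) with h | h <;> rcases hδ i with h' | h' <;> simp [h, h']
    · rw [← hdiag v]
      exact (congrFun (congrFun hMZ v) v).symm
  choose φ ε hε hφ using hsingle
  have hentry (v w) : M v w = ε v * seidelK4 (φ v) (φ w) * ε w := by
    have h : M v w = Z v ᵥ* seidelK4 ⬝ᵥ Z w := congrFun (congrFun hMZ v) w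
    rw [h, hφ, hφ, Matrix.single_vecMul, dotProduct_single]
    rfl
  have hεsq (v) : ε v * ε v = 1 := by rcases hε v with h | h <;> simp [h]
  refine ⟨φ, ε, hε, ?_⟩
  rw [seidelMatrix_comap_top, eq_sub_of_add_eq hM.symm]
  ext v w
  rw [Matrix.mul_diagonal, Matrix.diagonal_mul, Matrix.sub_apply, Matrix.sub_apply, hentry,
    Matrix.submatrix_apply]
  have h1 : ε v * (1 : Matrix W W ℝ) v w * ε w = (1 : Matrix W W ℝ) v w := by
    by_cases hvw : v = w
    · subst hvw
      simp [hεsq]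
    · simp [hvw]
  linear_combination h1 - seidelK4 (φ v) (φ w) * ε w * ε w * hεsq v - seidelK4 (φ v) (φ w) * hεsq w

lemma SwitchingEquiv.charpoly_eq {V : Type*} [Fintype V] [DecidableEq V] {G H : SimpleGraph V}
    (h : SwitchingEquiv G H) : (seidelMatrix H).charpoly = (seidelMatrix G).charpoly := by
  obtain ⟨ε, hε, h⟩ := h
  have hsq (v) : ε v * ε v = 1 := by rcases hε v with h | h <;> simp [h]
  rw [h, Matrix.charpoly_mul_comm, ← Matrix.mul_assoc, diagonal_mul_diagonal]
  simp [hsq]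

lemma charpoly_add_one {V : Type*} [Fintype V] [DecidableEq V] (A : Matrix V V ℝ) :
    (A + 1).charpoly = A.charpoly.comp (X - 1) := by
  simpa [sub_eq_add_neg, -scalar_apply] using Matrix.charpoly_sub_scalar A (-1)

lemma Matrix.IsHermitian.rank_eq_card_filter_roots {V : Type*} [Fintype V] [DecidableEq V]
    {A : Matrix V V ℝ} (hA : A.IsHermitian) :
    A.rank = (A.charpoly.roots.filter (· ≠ 0)).card := by
  rw [hA.rank_eq_card_non_zero_eigs, hA.roots_charpoly_eq_eigenvalues, Fintype.card_subtype,
    Multiset.filter_map, Multiset.card_map]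
  rfl

lemma rank_submatrix_seidelK4 {V : Type*} [Fintype V] {φ : V → Fin 4}
    (hφ : Function.Surjective φ) : (seidelK4.submatrix φ φ).rank = 4 := by
  have hK : seidelK4.rank = 4 := by
    rw [rank_of_det_ne_zero (by rw [det_seidelK4]; norm_num), Fintype.card_fin]
  refine le_antisymm ((rank_submatrix_le _ _ _).trans hK.le) ?_
  have := rank_submatrix_le (seidelK4.submatrix φ φ) (Function.surjInv hφ) (Function.surjInv hφ)
  rwa [submatrix_submatrix, (Function.rightInverse_surjInv hφ).comp_eq_id, submatrix_id_id,
    hK] at this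

/-- The sizes of the parts of cospectral complete four-partite graphs agree up to `e₂`. -/
lemma card_fiber_symm_eq {V W : Type*} [Fintype V] [Fintype W] [DecidableEq V] [DecidableEq W]
    {ψ : V → Fin 4} {φ : W → Fin 4} {n m : Fin 4 → ℕ}
    (h : (seidelK4.submatrix φ φ).charpoly = (seidelK4.submatrix ψ ψ).charpoly)
    (hn : ∀ i, Fintype.card {v // ψ v = i} = n i) (hm : ∀ i, Fintype.card {w // φ w = i} = m i) :
    ∑ i, m i = ∑ i, n i ∧ ∏ i, m i = ∏ i, n i ∧
      m 0 * m 1 * m 2 + m 0 * m 1 * m 3 + m 0 * m 2 * m 3 + m 1 * m 2 * m 3 =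
        n 0 * n 1 * n 2 + n 0 * n 1 * n 3 + n 0 * n 2 * n 3 + n 1 * n 2 * n 3 := by
  have hcard := congrArg natDegree h
  rw [charpoly_natDegree_eq_dim, charpoly_natDegree_eq_dim] at hcard
  have h1 := charpoly_submatrix_seidelK4 φ
  rw [h, charpoly_submatrix_seidelK4, hcard] at h1
  have h2 := mul_left_cancel₀ (pow_ne_zero _ X_ne_zero) h1
  simp only [hn, hm] at h2
  have h3 (t : ℝ) := congrArg (Polynomial.eval t) h2
  simp only [eval_charpoly_diagonal_mul_seidelK4] at h3
  have e0 := h3 0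
  have e1 := h3 1
  have e2 := h3 2
  rw [Fin.sum_univ_four, Fin.sum_univ_four, Fin.prod_univ_four, Fin.prod_univ_four]
  refine ⟨?_, ?_, ?_⟩ <;> rify <;> linarith

lemma card_sigma_fst_eq {ι : Type*} [Fintype ι] [DecidableEq ι] (n : ι → ℕ) (i : ι) :
    Fintype.card {x : Σ i, Fin (n i) // x.1 = i} = n i := by
  rw [Fintype.card_congr (Equiv.sigmaSubtype i), Fintype.card_fin]

lemma nonempty_iso_completeMultipartiteGraph {W : Type*} [Fintype W] {ι : Type*} [Fintype ι]
    [DecidableEq ι] {n : ι → ℕ} (φ : W → ι) (σ : ι ≃ ι)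
    (h : ∀ i, n (σ i) = Fintype.card {w // φ w = i}) :
    Nonempty ((⊤ : SimpleGraph ι).comap φ ≃g completeMultipartiteGraph fun i => Fin (n i)) := by
  have hcard (i : ι) : Nonempty ({w // σ (φ w) = i} ≃ {x : Σ i, Fin (n i) // x.1 = i}) := by
    rw [← Fintype.card_eq, card_sigma_fst_eq, ← σ.apply_symm_apply i, h]
    exact Fintype.card_congr (Equiv.subtypeEquivRight fun w => σ.injective.eq_iff)
  let e := Equiv.ofFiberEquiv fun i => (hcard i).some
  have he (w : W) : (e w).1 = σ (φ w) := Equiv.ofFiberEquiv_map _ w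
  exact ⟨⟨e, by simp [completeMultipartiteGraph, he]⟩⟩

/-- **Corollary.** If `max {n_1, n_2, n_3, n_4}` is prime, then the complete
`4`-partite graph `K_{n_1,n_2,n_3,n_4}` is determined, up to switching, by its
Seidel spectrum. -/
theorem sDetermined_four_partite_of_max_prime (n : Fin 4 → ℕ) (hn : ∀ i, 1 ≤ n i)
    (hp : Nat.Prime (Finset.univ.sup n)) :
    SDetermined (completeMultipartiteGraph fun i : Fin 4 => Fin (n i)) := by
  intro W _ _ H hH
  obtain ⟨ψ, hψ⟩ : ∃ ψ : (Σ i, Fin (n i)) → Fin 4, ψ = Sigma.fst := ⟨_, rfl⟩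
  have hG : seidelMatrix (completeMultipartiteGraph fun i : Fin 4 => Fin (n i)) + 1 =
      seidelK4.submatrix ψ ψ := by
    rw [hψ, completeMultipartiteGraph, seidelMatrix_comap_top, sub_add_cancel]
  have hsurj : Function.Surjective ψ := fun i => ⟨⟨i, 0, hn i⟩, by rw [hψ]⟩
  have hcp : (seidelMatrix H + 1).charpoly = (seidelK4.submatrix ψ ψ).charpoly := by
    rw [charpoly_add_one, hH, ← charpoly_add_one, hG]
  have hrank : (seidelMatrix H + 1).rank = 4 := by
    rw [(isHermitian_seidelMatrix_add_one H).rank_eq_card_filter_roots, hcp, ← hG,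
      ← (isHermitian_seidelMatrix_add_one _).rank_eq_card_filter_roots, hG,
      rank_submatrix_seidelK4 hsurj]
  obtain ⟨φ, hφ⟩ := exists_switchingEquiv_comap_top hrank
  refine ⟨_, hφ, ?_⟩
  have hφcp : (seidelK4.submatrix φ φ).charpoly = (seidelK4.submatrix ψ ψ).charpoly := by
    rw [← hcp, charpoly_add_one, ← hφ.charpoly_eq, ← charpoly_add_one, seidelMatrix_comap_top,
      sub_add_cancel]
  obtain ⟨hsum, hprod, h3⟩ := card_fiber_symm_eq (n := n) hφcp
    (fun i => by simpa only [hψ] using card_sigma_fst_eq n i)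
    (fun _ => rfl)
  have hpos : ∀ i, 1 ≤ Fintype.card {w // φ w = i} := fun i => by
    have : ∏ i, n i ≠ 0 := Finset.prod_ne_zero_iff.2 fun i _ => Nat.one_le_iff_ne_zero.1 (hn i)
    rw [← hprod, Finset.prod_ne_zero_iff] at this
    exact Nat.one_le_iff_ne_zero.2 (this i (mem_univ i))
  obtain ⟨σ, hσ⟩ := exists_perm_of_symm_eq hp hpos hsum hprod h3
  exact nonempty_iso_completeMultipartiteGraph φ σ hσ
end

section
/- If a graph G has the same Seidel spectrum as the complete k-partite graph K_{n_1,…,n_k} (all n_i ≥ 1), then G is switching equivalent to a complete k-partite graph. -/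
open Polynomial Matrix Finset SimpleGraph

lemma seidelMatrix_add_one_apply {V : Type*} [Fintype V] [DecidableEq V]
    (G : SimpleGraph V) [DecidableRel G.Adj] (u v : V) :
    (seidelMatrix G + 1) u v = if G.Adj u v then -1 else 1 := by
  by_cases h : G.Adj u v
  · simp [seidelMatrix, two_mul, h]
    ring
  · simp [seidelMatrix, two_mul, h]

lemma seidelMatrix_isHermitian {V : Type*} [Fintype V] [DecidableEq V]
    (G : SimpleGraph V) : (seidelMatrix G).IsHermitian := by
  classical
  ext u v
  simp [seidelMatrix, two_mul, Matrix.one_apply, G.adj_comm, eq_comm]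

/-- The `±1` matrix whose entry at `(u, v)` is `1` exactly when `f u = f v`. -/
def fiberSign {V C : Type*} [DecidableEq C] (f : V → C) : Matrix V V ℝ :=
  Matrix.of fun u v => if f u = f v then 1 else -1

/-- The incidence matrix of the fibers of `f`. -/
def fiberIncidence {V C : Type*} [DecidableEq C] (f : V → C) : Matrix V C ℝ :=
  Matrix.of fun v c => if f v = c then 1 else 0

lemma fiberSign_eq_sub {V C : Type*} [Fintype C] [DecidableEq C] (f : V → C) :
    fiberSign f = (2 : ℝ) • (fiberIncidence f * (fiberIncidence f)ᵀ) -
      vecMulVec (fun _ => 1) (fun _ => 1) := by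
  ext u v
  by_cases h : f u = f v
  · simp [fiberSign, fiberIncidence, Matrix.mul_apply, vecMulVec, h]
    norm_num
  · simp [fiberSign, fiberIncidence, Matrix.mul_apply, vecMulVec, h]

lemma fiberSign_id_mulVec {C : Type*} [Fintype C] [DecidableEq C] (x : C → ℝ) (c : C) :
    (fiberSign (id : C → C) *ᵥ x) c = 2 * x c - ∑ d, x d := by
  have h : ∀ d, (if c = d then (1 : ℝ) else -1) * x d = (if c = d then 2 * x d else 0) - x d := by
    intro d
    split_ifs <;> ring
  simp [fiberSign, Matrix.mulVec, dotProduct, h, Finset.sum_sub_distrib]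

lemma rank_fiberSign_id {C : Type*} [Fintype C] [DecidableEq C] (hC : Fintype.card C ≠ 2) :
    (fiberSign (id : C → C)).rank = Fintype.card C := by
  refine Matrix.rank_of_isUnit _ (Matrix.mulVec_injective_iff_isUnit.1 ?_)
  refine (injective_iff_map_eq_zero (Matrix.mulVecLin (fiberSign (id : C → C)))).2 fun x hx => ?_
  have h : ∀ c, 2 * x c = ∑ d, x d := fun c => by
    have := congrFun hx c
    rw [Matrix.mulVecLin_apply, fiberSign_id_mulVec] at this
    simpa [sub_eq_zero] using this
  have hs : ∑ d, x d = 0 := by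
    have h2 : 2 * ∑ d, x d = Fintype.card C * ∑ d, x d := by
      rw [Finset.mul_sum, Finset.sum_congr rfl fun c _ => h c]
      simp
    have h3 : ((Fintype.card C : ℝ) - 2) * ∑ d, x d = 0 := by linarith
    refine (mul_eq_zero.1 h3).resolve_left (sub_ne_zero.2 ?_)
    exact_mod_cast hC
  ext c
  have := h c
  rw [hs] at this
  simpa using this

lemma rank_fiberSign {V C : Type*} [Fintype V] [Fintype C] [DecidableEq C] {f : V → C}
    (hf : f.Surjective) (hC : Fintype.card C ≠ 2) : (fiberSign f).rank = Fintype.card C := by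
  have hfac : fiberSign f =
      fiberIncidence f * (fiberSign (id : C → C) * (fiberIncidence f)ᵀ) := by
    ext u v
    simp only [Matrix.mul_apply, fiberIncidence, Matrix.transpose_apply, Matrix.of_apply, mul_ite,
      mul_one, mul_zero, ite_mul, one_mul, zero_mul, Finset.sum_ite_eq, Finset.mem_univ, if_true]
    rfl
  apply le_antisymm
  · rw [hfac]
    exact (Matrix.rank_mul_le_left _ _).trans (Matrix.rank_le_card_width _)
  · obtain ⟨g, hg⟩ := hf.hasRightInverse
    have hsub : (fiberSign f).submatrix g g = fiberSign (id : C → C) := by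
      ext c d
      simp [fiberSign, hg c, hg d]
    rw [← rank_fiberSign_id hC, ← hsub]
    exact Matrix.rank_submatrix_le _ _ _

lemma exists_fiberSign_eq_vecMulVec {V C : Type*} [Fintype C] [DecidableEq C] (f : V → C)
    (hC : Fintype.card C ≤ 2) :
    ∃ δ : V → ℝ, (∀ v, δ v = 1 ∨ δ v = -1) ∧ fiberSign f = vecMulVec δ δ := by
  rcases isEmpty_or_nonempty C with h | ⟨⟨c⟩⟩
  · have : IsEmpty V := f.isEmpty
    exact ⟨fun _ => 1, by simp, by ext u; exact isEmptyElim u⟩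
  · refine ⟨fun v => if f v = c then 1 else -1, fun v => by simp only; split_ifs <;> simp, ?_⟩
    have key : ∀ u v, f u ≠ c → f v ≠ c → f u = f v := by
      intro u v hu hv
      by_contra huv
      exact absurd (Fintype.two_lt_card_iff.2 ⟨_, _, _, huv, hu, hv⟩) (by omega)
    ext u v
    have := key u v
    by_cases hu : f u = c <;> by_cases hv : f v = c <;>
      simp_all [fiberSign, vecMulVec, eq_comm]

lemma rank_fiberSign_le_one {V C : Type*} [Fintype V] [Fintype C] [DecidableEq C] (f : V → C)
    (hC : Fintype.card C ≤ 2) : (fiberSign f).rank ≤ 1 := by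
  obtain ⟨δ, -, h⟩ := exists_fiberSign_eq_vecMulVec f hC
  rw [h]
  exact Matrix.rank_vecMulVec_le _ _

/-- Real symmetric matrices with the same characteristic polynomial are orthogonally similar. -/
lemma exists_orthogonal_conj_of_charpoly_eq {V : Type*} [Fintype V] [DecidableEq V]
    {A B : Matrix V V ℝ} (hA : A.IsHermitian) (hB : B.IsHermitian)
    (h : A.charpoly = B.charpoly) :
    ∃ Q : Matrix V V ℝ, Q * Qᵀ = 1 ∧ A = Q * B * Qᵀ := by
  have he := (hA.eigenvalues_eq_eigenvalues_iff hB).2 h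
  have h1 := hA.spectral_theorem
  have h2 := hB.spectral_theorem
  rw [Unitary.conjStarAlgAut_apply] at h1 h2
  rw [he] at h1
  set D : Matrix V V ℝ := diagonal (RCLike.ofReal ∘ hB.eigenvalues)
  have hU := Matrix.mem_unitaryGroup_iff.1 hA.eigenvectorUnitary.2
  have hP' := Matrix.mem_unitaryGroup_iff'.1 hB.eigenvectorUnitary.2
  set U : Matrix V V ℝ := hA.eigenvectorUnitary.1
  set P : Matrix V V ℝ := hB.eigenvectorUnitary.1
  simp only [Matrix.star_eq_conjTranspose, Matrix.conjTranspose_eq_transpose_of_trivial]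
    at h1 h2 hU hP'
  refine ⟨U * Pᵀ, ?_, ?_⟩
  · rw [Matrix.transpose_mul, Matrix.transpose_transpose, Matrix.mul_assoc,
      ← Matrix.mul_assoc Pᵀ, hP', Matrix.one_mul, hU]
  · rw [h1, h2, Matrix.transpose_mul, Matrix.transpose_transpose]
    calc U * D * Uᵀ = U * ((Pᵀ * P) * D * (Pᵀ * P)) * Uᵀ := by simp [hP']
      _ = _ := by simp only [Matrix.mul_assoc]

/-- In a `±1` Gram matrix with at most one negative direction, a triple of positive sign product
contains two vertices with proportional rows. -/
lemma exists_row_eq_of_triple {V C : Type*} [Fintype C]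
    {M : Matrix V V ℝ} {B : Matrix V C ℝ} {y : V → ℝ}
    (hM : M = (2 : ℝ) • (B * Bᵀ) - vecMulVec y y)
    (hsign : ∀ u v, M u v = 1 ∨ M u v = -1) (hdiag : ∀ v, M v v = 1)
    {u v w : V} (h : M u v * M v w * M u w = 1) :
    (∀ t, M u t = M u v * M v t) ∨ (∀ t, M v t = M v w * M w t) ∨
      (∀ t, M u t = M u w * M w t) := by
  have hent : ∀ a b, M a b = 2 * ∑ c, B a c * B b c - y a * y b := fun a b => by
    simp [hM, Matrix.mul_apply, vecMulVec]
  set s := M u v with hs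
  set r := M u w with hr
  have hvw : M v w = s * r := by
    rcases hsign u v with h1 | h1 <;> rcases hsign u w with h2 | h2 <;>
      rcases hsign v w with h3 | h3 <;> rw [← hs] at h1 <;> rw [← hr] at h2 <;>
      rw [h1, h2, h3] at h <;> rw [h1, h2, h3] <;> revert h <;> norm_num
  have hs2 : s * s = 1 := by rcases hsign u v with h | h <;> rw [hs, h] <;> norm_num
  have hr2 : r * r = 1 := by rcases hsign u w with h | h <;> rw [hr, h] <;> norm_num
  set p : C → ℝ := fun c => B u c - s * B v c with hp
  set q : C → ℝ := fun c => B u c - r * B w c with hq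
  set a := y u - s * y v with ha
  set b := y u - r * y w with hb
  have euu := hdiag u
  have evv := hdiag v
  have eww := hdiag w
  have euv := hs.symm
  have euw := hr.symm
  have evw := hvw
  rw [hent] at euu evv eww euv euw evw
  have hpp : 2 * ∑ c, p c * p c = a * a := by
    have : ∑ c, p c * p c = ∑ c, B u c * B u c - 2 * s * ∑ c, B u c * B v c
        + s * s * ∑ c, B v c * B v c := by
      simp only [hp, Finset.mul_sum, ← Finset.sum_sub_distrib, ← Finset.sum_add_distrib]
      exact Finset.sum_congr rfl fun c _ => by ring
    rw [this, ha]
    linear_combination euu - 2 * s * euv + s * s * evv - hs2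
  have hqq : 2 * ∑ c, q c * q c = b * b := by
    have : ∑ c, q c * q c = ∑ c, B u c * B u c - 2 * r * ∑ c, B u c * B w c
        + r * r * ∑ c, B w c * B w c := by
      simp only [hq, Finset.mul_sum, ← Finset.sum_sub_distrib, ← Finset.sum_add_distrib]
      exact Finset.sum_congr rfl fun c _ => by ring
    rw [this, hb]
    linear_combination euu - 2 * r * euw + r * r * eww - hr2
  have hpq : 2 * ∑ c, p c * q c = a * b := by
    have : ∑ c, p c * q c = ∑ c, B u c * B u c - s * ∑ c, B u c * B v c
        - r * ∑ c, B u c * B w c + s * r * ∑ c, B v c * B w c := by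
      simp only [hp, hq, Finset.mul_sum, ← Finset.sum_sub_distrib, ← Finset.sum_add_distrib]
      exact Finset.sum_congr rfl fun c _ => by ring
    rw [this, ha, hb]
    linear_combination euu - s * euv - r * euw + s * r * evw - hs2 - hr2 + s * s * hr2 + hs2
  have hpt : ∀ t, M u t - s * M v t = 2 * ∑ c, p c * B t c - a * y t := fun t => by
    have : ∑ c, p c * B t c = ∑ c, B u c * B t c - s * ∑ c, B v c * B t c := by
      simp only [hp, Finset.mul_sum, ← Finset.sum_sub_distrib]
      exact Finset.sum_congr rfl fun c _ => by ring
    rw [this, hent, hent, ha]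
    ring
  have hqt : ∀ t, M u t - r * M w t = 2 * ∑ c, q c * B t c - b * y t := fun t => by
    have : ∑ c, q c * B t c = ∑ c, B u c * B t c - r * ∑ c, B w c * B t c := by
      simp only [hq, Finset.mul_sum, ← Finset.sum_sub_distrib]
      exact Finset.sum_congr rfl fun c _ => by ring
    rw [this, hent, hent, hb]
    ring
  have zero_of_sq : ∀ x : C → ℝ, ∑ c, x c * x c = 0 → ∀ c, x c = 0 := fun x hx c =>
    mul_self_eq_zero.1
      ((Finset.sum_eq_zero_iff_of_nonneg fun c _ => mul_self_nonneg (x c)).1 hx c (mem_univ c))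
  by_cases ha0 : a = 0
  · left
    intro t
    have hp0 := zero_of_sq p (by rw [ha0] at hpp; linarith)
    have := hpt t
    simp only [hp0, ha0] at this
    simp at this
    linarith
  by_cases hb0 : b = 0
  · right; right
    intro t
    have hq0 := zero_of_sq q (by rw [hb0] at hqq; linarith)
    have := hqt t
    simp only [hq0, hb0] at this
    simp at this
    linarith
  have hpar := zero_of_sq (fun c => b * p c - a * q c) (by
    have : ∑ c, (b * p c - a * q c) * (b * p c - a * q c) =
        b * b * ∑ c, p c * p c - 2 * a * b * ∑ c, p c * q c + a * a * ∑ c, q c * q c := by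
      simp only [Finset.mul_sum, ← Finset.sum_sub_distrib, ← Finset.sum_add_distrib]
      exact Finset.sum_congr rfl fun c _ => by ring
    rw [this]
    linear_combination (b * b * hpp - 2 * a * b * hpq + a * a * hqq) / 2)
  have hker : ∀ t, b * (M u t - s * M v t) = a * (M u t - r * M w t) := fun t => by
    have : ∑ c, (b * p c - a * q c) * B t c =
        b * ∑ c, p c * B t c - a * ∑ c, q c * B t c := by
      simp only [Finset.mul_sum, ← Finset.sum_sub_distrib]
      exact Finset.sum_congr rfl fun c _ => by ring
    simp only [hpar, zero_mul, Finset.sum_const_zero] at this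
    rw [hpt, hqt]
    linear_combination -2 * this
  right; left
  intro t
  rw [hvw]
  have ht := hker t
  rcases hsign u v with h1 | h1 <;> rcases hsign u w with h2 | h2 <;>
    rw [← hs] at h1 <;> rw [← hr] at h2 <;> rw [h1, h2] at ht ⊢ <;>
    rcases hsign u t with h3 | h3 <;> rcases hsign v t with h4 | h4 <;>
    rcases hsign w t with h5 | h5 <;> rw [h3, h4, h5] at ht <;> rw [h4, h5] <;>
    first
    | norm_num; done
    | exact absurd (by linarith) ha0
    | exact absurd (by linarith) hb0

/-- A `±1` Gram matrix with at most one negative direction is switching equivalent to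
some `fiberSign f`. -/
lemma exists_switching_fiberSign {V C : Type} [Fintype C]
    {M : Matrix V V ℝ} {B : Matrix V C ℝ} {y : V → ℝ}
    (hM : M = (2 : ℝ) • (B * Bᵀ) - vecMulVec y y)
    (hsign : ∀ u v, M u v = 1 ∨ M u v = -1) (hdiag : ∀ v, M v v = 1) :
    ∃ s : Setoid V, ∀ [DecidableEq (Quotient s)], ∃ ε : V → ℝ, (∀ v, ε v = 1 ∨ ε v = -1) ∧
      ∀ u v, fiberSign (Quotient.mk s) u v = ε u * M u v * ε v := by
  have hsymm : ∀ u v, M u v = M v u := fun u v => by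
    simp [hM, Matrix.mul_apply, vecMulVec, mul_comm]
  have hsq : ∀ u v, M u v * M u v = 1 := fun u v => by
    rcases hsign u v with h | h <;> rw [h] <;> norm_num
  let s : Setoid V :=
    { r := fun u v => ∀ t, M u t = M u v * M v t
      iseqv :=
        { refl := fun u t => by rw [hdiag, one_mul]
          symm := fun {u v} h t => by
            rw [hsymm v u, h t, ← mul_assoc, hsq, one_mul]
          trans := fun {u v w} h h' t => by
            rw [h t, h' t, h w, mul_assoc] } }
  refine ⟨s, ?_⟩
  intro _
  have hmk : ∀ {u v}, Quotient.mk s u = Quotient.mk s v ↔ ∀ t, M u t = M u v * M v t :=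
    fun {u v} => Quotient.eq
  set F := fiberSign (Quotient.mk s) with hF
  have hFsign : ∀ u v, F u v = 1 ∨ F u v = -1 := fun u v => by
    simp only [hF, fiberSign, Matrix.of_apply]
    split_ifs <;> simp
  have hFsq : ∀ u v, F u v * F u v = 1 := fun u v => by
    rcases hFsign u v with h | h <;> rw [h] <;> norm_num
  have htriple : ∀ u v w, M u v * M v w * M u w = F u v * F v w * F u w := by
    intro u v w
    by_cases huv : Quotient.mk s u = Quotient.mk s v
    · have hF' : F u v * F v w * F u w = 1 := by
        simp only [hF, fiberSign, Matrix.of_apply, huv, if_true]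
        split_ifs <;> norm_num
      rw [hF', ← hmk.1 huv w, hsq]
    by_cases hvw : Quotient.mk s v = Quotient.mk s w
    · have hF' : F u v * F v w * F u w = 1 := by
        simp only [hF, fiberSign, Matrix.of_apply, hvw, if_true]
        split_ifs <;> norm_num
      have h1 := hmk.1 hvw u
      rw [hF', hsymm u v, hsymm u w, mul_assoc, ← h1, hsq]
    by_cases huw : Quotient.mk s u = Quotient.mk s w
    · have hF' : F u v * F v w * F u w = 1 := by
        simp only [hF, fiberSign, Matrix.of_apply, huw, if_true]
        split_ifs <;> simp_all
      have h1 := hmk.1 huw v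
      rw [hF', hsymm v w, mul_assoc, mul_comm (M w v), ← h1, hsq]
    have hF' : F u v * F v w * F u w = -1 := by
      simp [hF, fiberSign, huv, hvw, huw]
    have hne : M u v * M v w * M u w ≠ 1 := by
      intro h
      rcases exists_row_eq_of_triple hM hsign hdiag h with h | h | h
      · exact huv (hmk.2 h)
      · exact hvw (hmk.2 h)
      · exact huw (hmk.2 h)
    rw [hF']
    rcases hsign u v with h1 | h1 <;> rcases hsign v w with h2 | h2 <;>
      rcases hsign u w with h3 | h3 <;> rw [h1, h2, h3] at hne ⊢ <;>
      revert hne <;> norm_num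
  rcases isEmpty_or_nonempty V with hV | ⟨⟨o⟩⟩
  · exact ⟨fun _ => 1, by simp, fun u => isEmptyElim u⟩
  refine ⟨fun v => M o v * F o v, fun v => ?_, fun u v => ?_⟩
  · rcases hsign o v with h | h <;> rcases hFsign o v with h' | h' <;> simp [h, h']
  · have h := htriple o u v
    have hu := hFsq o u
    have hv := hFsq o v
    linear_combination (-F o u * F o v) * h - F u v * hv * (F o u * F o u) - F u v * hu

/-- The complete multipartite graph whose parts are the fibers of `g`. -/
def fiberGraph {V C : Type*} (g : V → C) : SimpleGraph V where
  Adj u v := g u ≠ g v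
  symm := ⟨fun _ _ h => h.symm⟩
  loopless := ⟨fun _ h => h rfl⟩

lemma seidelMatrix_fiberGraph {V C : Type*} [Fintype V] [DecidableEq V] [DecidableEq C]
    (g : V → C) : seidelMatrix (fiberGraph g) = fiberSign g - 1 := by
  classical
  rw [eq_sub_iff_add_eq]
  ext u v
  rw [seidelMatrix_add_one_apply]
  by_cases h : g u = g v <;> simp [fiberGraph, fiberSign, h]

lemma exists_fiberGraph_iso {V : Type} {k : ℕ} [Fintype V] {g : V → Fin k}
    (hg : g.Surjective) :
    ∃ q : Fin k → ℕ, (∀ i, 1 ≤ q i) ∧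
      Nonempty (fiberGraph g ≃g completeMultipartiteGraph fun i => Fin (q i)) := by
  classical
  refine ⟨fun i => Fintype.card {x // g x = i}, fun i => ?_, ⟨⟨(Equiv.sigmaFiberEquiv g).symm.trans
    (Equiv.sigmaCongrRight fun i => Fintype.equivFin {x // g x = i}), ?_⟩⟩⟩
  · obtain ⟨x, hx⟩ := hg i
    exact Fintype.card_pos_iff.2 ⟨⟨x, hx⟩⟩
  · intro a b
    rfl

/-- **Theorem.** Any graph with the same Seidel spectrum as the complete
`k`-partite graph `K_{n_1,…,n_k}` is switching equivalent to a complete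
`k`-partite graph. -/
theorem switchingEquiv_multipartite_of_seidel_cospectral (k : ℕ) (n : Fin k → ℕ)
    (hn : ∀ i, 1 ≤ n i) (W : Type) [Fintype W] [DecidableEq W] (G : SimpleGraph W)
    (hcospec : (seidelMatrix G).charpoly =
      (seidelMatrix (completeMultipartiteGraph fun i => Fin (n i))).charpoly) :
    ∃ H : SimpleGraph W, SwitchingEquiv G H ∧
      ∃ q : Fin k → ℕ, (∀ i, 1 ≤ q i) ∧
        Nonempty (H ≃g completeMultipartiteGraph fun i => Fin (q i)) := by
  classical
  set V := Σ i, Fin (n i)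
  have hcard : Fintype.card V = Fintype.card W := by
    have := congrArg Polynomial.natDegree hcospec
    rwa [Matrix.charpoly_natDegree_eq_dim, Matrix.charpoly_natDegree_eq_dim, eq_comm] at this
  let e : V ≃ W := Fintype.equivOfCardEq hcard
  let f : W → Fin k := fun w => (e.symm w).1
  have hf : f.Surjective := fun i => ⟨e ⟨i, ⟨0, hn i⟩⟩, by simp [f]⟩
  have hcp : (seidelMatrix G).charpoly = (seidelMatrix (fiberGraph f)).charpoly := by
    rw [hcospec, ← Matrix.charpoly_reindex e]
    congr 1
    rw [seidelMatrix_fiberGraph, eq_sub_iff_add_eq]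
    have h1 : Matrix.reindex e e (1 : Matrix V V ℝ) = 1 := by simp
    rw [← h1]
    ext u v
    have h2 := seidelMatrix_add_one_apply (completeMultipartiteGraph fun i => Fin (n i))
      (e.symm u) (e.symm v)
    refine h2.trans ?_
    by_cases h : (e.symm u).1 = (e.symm v).1 <;> simp [fiberSign, f, h]
  obtain ⟨Q, hQ, hconj⟩ := exists_orthogonal_conj_of_charpoly_eq
    (seidelMatrix_isHermitian G) (seidelMatrix_isHermitian (fiberGraph f)) hcp
  set M := seidelMatrix G + 1 with hMdef
  have hMconj : M = Q * fiberSign f * Qᵀ := by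
    rw [hMdef, hconj, seidelMatrix_fiberGraph, Matrix.mul_sub, Matrix.sub_mul, Matrix.mul_one, hQ,
      sub_add_cancel]
  have hM : M = (2 : ℝ) • ((Q * fiberIncidence f) * (Q * fiberIncidence f)ᵀ) -
      vecMulVec (Q *ᵥ fun _ => 1) (Q *ᵥ fun _ => 1) := by
    rw [hMconj, fiberSign_eq_sub, Matrix.mul_sub, Matrix.sub_mul, Matrix.mul_vecMulVec,
      Matrix.vecMulVec_mul, Matrix.vecMul_transpose, Matrix.transpose_mul]
    simp only [Matrix.mul_smul, Matrix.smul_mul, Matrix.mul_assoc]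
  have hrank : M.rank = (fiberSign f).rank := by
    have hdet : IsUnit Q.det := (Matrix.isUnit_iff_isUnit_det _).1
      (IsUnit.of_mul_eq_one _ hQ)
    rw [hMconj, Matrix.rank_mul_eq_left_of_isUnit_det _ _ (by rwa [Matrix.det_transpose]),
      Matrix.rank_mul_eq_right_of_isUnit_det _ _ hdet]
  obtain ⟨s, hs⟩ := exists_switching_fiberSign hM
    (fun u v => by rw [hMdef, seidelMatrix_add_one_apply]; split_ifs <;> simp)
    (fun v => by rw [hMdef, seidelMatrix_add_one_apply]; simp)
  obtain ⟨ε, hε, hsw⟩ := hs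
  have hsq : ∀ v, ε v * ε v = 1 := fun v => by rcases hε v with h | h <;> rw [h] <;> norm_num
  have hsw' : fiberSign (Quotient.mk s) = diagonal ε * M * diagonal ε := by
    ext u v
    simp [hsw]
  have hrank' : (fiberSign (Quotient.mk s)).rank = (fiberSign f).rank := by
    have hdet : IsUnit (diagonal ε).det := by
      refine (Matrix.isUnit_iff_isUnit_det _).1 (IsUnit.of_mul_eq_one (diagonal ε) ?_)
      simp [hsq]
    rw [hsw', Matrix.rank_mul_eq_left_of_isUnit_det _ _ hdet,
      Matrix.rank_mul_eq_right_of_isUnit_det _ _ hdet, hrank]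
  suffices ∃ g : W → Fin k, g.Surjective ∧ ∃ δ : W → ℝ, (∀ v, δ v = 1 ∨ δ v = -1) ∧
      ∀ u v, fiberSign g u v = δ u * M u v * δ v by
    obtain ⟨g, hg, δ, hδ, hgM⟩ := this
    refine ⟨fiberGraph g, ⟨δ, hδ, ?_⟩, exists_fiberGraph_iso hg⟩
    have hG : seidelMatrix G = M - 1 := by rw [hMdef, add_sub_cancel_right]
    have hδ2 : ∀ v, δ v * δ v = 1 := fun v => by rcases hδ v with h | h <;> rw [h] <;> norm_num
    rw [seidelMatrix_fiberGraph, hG, Matrix.mul_sub, Matrix.sub_mul, Matrix.mul_one,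
      Matrix.diagonal_mul_diagonal]
    simp only [hδ2, Matrix.diagonal_one]
    congr 1
    ext u v
    simp [hgM]
  have hmk : Function.Surjective (Quotient.mk s) := Quotient.mk_surjective
  by_cases hk : k ≤ 2
  · have hq : Fintype.card (Quotient s) ≤ 2 := by
      by_contra hq
      have h1 := rank_fiberSign hmk (by omega)
      have h2 := rank_fiberSign_le_one f (by simpa using hk)
      omega
    obtain ⟨α, hα, hfα⟩ := exists_fiberSign_eq_vecMulVec f (by simpa using hk)
    obtain ⟨β, hβ, hqβ⟩ := exists_fiberSign_eq_vecMulVec (Quotient.mk s) hq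
    refine ⟨f, hf, fun v => α v * β v * ε v, fun v => ?_, fun u v => ?_⟩
    · rcases hα v with h | h <;> rcases hβ v with h' | h' <;> rcases hε v with h'' | h'' <;>
        simp [h, h', h'']
    · have h1 := hsw u v
      have hβ2 : ∀ v, β v * β v = 1 := fun v => by rcases hβ v with h | h <;> rw [h] <;> norm_num
      rw [hqβ, vecMulVec_apply] at h1
      rw [hfα, vecMulVec_apply]
      linear_combination (α u * α v * β u * β v) * h1 - α u * α v * hβ2 u -
        α u * α v * β u * β u * hβ2 v
  · have h1 := rank_fiberSign hf (by simpa using by omega)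
    have hq : Fintype.card (Quotient s) = k := by
      rw [Fintype.card_fin] at h1
      by_cases hq : Fintype.card (Quotient s) ≤ 2
      · have := rank_fiberSign_le_one (Quotient.mk s) hq
        omega
      · have := rank_fiberSign hmk (by omega)
        omega
    let c : Quotient s ≃ Fin k := Fintype.equivFinOfCardEq hq
    refine ⟨c ∘ Quotient.mk s, c.surjective.comp hmk, ε, hε, fun u v => ?_⟩
    rw [← hsw]
    simp [fiberSign]
end
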